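/- arXiv:2012.14317 — 4 statements merged into one kernel-verified Lean document; each statement's English description precedes it below -/
import Mathlib

section
/- Spectral gap under the trickling-down profile: Let γ be a real with 0 ≤ γ ≤ 1/(d−1). Suppose λ₂(G_T) ≤ γ for every T ∈ 𝒞(d−2), and suppose λ₂(G_S) < 1 for every face S with |S| ≤ d−2. Then for every 2 ≤ k ≤ d, λ₂(P_k^∨) = λ₂(P_{k−1}^∧) ≤ 1 − (1/k)·(1 − (d−1)γ)/(1 − (d−k)γ). -/
/-!
Write `w S` for the total mass of `π_d` above `S` (`wgt`). Every `π_k`, and every link distribution,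
is proportional to `w`, and `w` satisfies the covering identity
`∑_{i ∉ S} w (S ∪ {i}) = (d - |S|) w S` (`WSys`). All spectral bounds are handled as inequalities
between quadratic forms on functions of mean zero (`LocSpec`, `DualGap`, `PrimalGap`), with the
weights `w` extended by zero to all subsets of `E`.

*Trickling down.* By Garland's identity (`WSys.sum_quad_link`) the quadratic form of the local walk
`G` at `R` is the average of those at the sets `R ∪ {x}`. If the latter have `λ₂ ≤ μ`, averaging
gives `G ≤ μ + (1 - μ) G²`. Tested on a second eigenfunction this reads
`(1 - λ₂) ((1 - μ) λ₂ - μ) ≤ 0`, so `λ₂ < 1` implies `λ₂ ≤ μ / (1 - μ)` (`trickle`); instead of an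
eigenfunction, the proof uses that the least valid bound cannot be improved by `trickle_step`.
Iterating from `γ` at size `d - 2` gives the bound `γ / (1 - (d - 2 - j) γ)` at size `j`
(`WSys.profile`).

*From local to global.* Expanding the square in `‖P^↓ g‖²` (`WSys.down_sq`) expresses the up-down
walk on size `m + 1` through the local walks at sets of size `m`. A local bound `λ` turns a gap `c`
of the down-up walk on size `m + 1` into a gap `(m + 1) / (m + 2) * (1 - λ) * c` of the up-down walk
on size `m + 1` (`WSys.gap_step`), and this is also a gap of the down-up walk on size `m + 2`,
because the up and down operators are adjoint (`dual_bound`). With the profile inserted, the product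
of the factors telescopes (`WSys.gap`).

*Equality of the two second eigenvalues.* On functions of mean zero both are the squared norm of
one of two mutually adjoint operators (`lamTwo_comm`).
-/

open Finset

noncomputable section

variable {E : Type*} [Fintype E] [DecidableEq E]

/-- The faces of cardinality `k` of the set family `C`. -/
def faces (C : Finset (Finset E)) (k : ℕ) : Finset (Finset E) :=
  C.filter fun S => S.card = k

/-- `C` is a pure simplicial complex of dimension `d`: it is nonempty, closed under
taking subsets, and every face is contained in a face of cardinality `d`
(hence all maximal faces have cardinality `d`). -/
def IsPureComplex (C : Finset (Finset E)) (d : ℕ) : Prop :=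
  C.Nonempty ∧ (∀ S ∈ C, ∀ T ⊆ S, T ∈ C) ∧ (∀ S ∈ C, ∃ T ∈ C, S ⊆ T ∧ T.card = d)

/-- `pid` is a probability distribution with full support on the top level faces. -/
def IsTopDist (C : Finset (Finset E)) (d : ℕ) (pid : Finset E → ℝ) : Prop :=
  (∀ T ∈ faces C d, 0 < pid T) ∧ ∑ T ∈ faces C d, pid T = 1

/-- The (unnormalised) weight of a face: total top-level mass above it. -/
def wgt (C : Finset (Finset E)) (d : ℕ) (pid : Finset E → ℝ) (S : Finset E) : ℝ :=
  ∑ T ∈ (faces C d).filter (fun T => S ⊆ T), pid T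

/-- The distribution `π_k` at level `k`: `π_k(S) ∝ Σ_{T ∈ C(d), T ⊇ S} π_d(T)`. -/
def piLev (C : Finset (Finset E)) (d : ℕ) (pid : Finset E → ℝ) (k : ℕ) (S : Finset E) : ℝ :=
  if S ∈ faces C k then wgt C d pid S / ∑ T ∈ faces C k, wgt C d pid T else 0

/-- The level-`k` faces of the link of the face `S`. -/
def linkFaces (C : Finset (Finset E)) (S : Finset E) (k : ℕ) : Finset (Finset E) :=
  Finset.univ.powerset.filter fun T => S ∩ T = ∅ ∧ S ∪ T ∈ C ∧ T.card = k

/-- The distribution `π_{S,k}` on the level-`k` faces of the link of `S`: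
`π_{S,k}(T) ∝ π_{|S|+k}(S ∪ T)`. -/
def linkPi (C : Finset (Finset E)) (d : ℕ) (pid : Finset E → ℝ) (S : Finset E) (k : ℕ)
    (T : Finset E) : ℝ :=
  if T ∈ linkFaces C S k then
    piLev C d pid (S.card + k) (S ∪ T) /
      ∑ T' ∈ linkFaces C S k, piLev C d pid (S.card + k) (S ∪ T')
  else 0

/-- Generic up operator with respect to a measure `ν` on a collection `dom` of faces:
from `R` move to a superset `T ∈ dom` with probability proportional to `ν T`.
Acts on functions on `dom`, producing a function on the level below. -/
def upWith (ν : Finset E → ℝ) (dom : Finset (Finset E)) (f : Finset E → ℝ) (R : Finset E) : ℝ :=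
  ∑ T ∈ dom.filter (fun T => R ⊆ T),
    (ν T / ∑ T' ∈ dom.filter (fun T' => R ⊆ T'), ν T') * f T

/-- The up operator `P_k^↑`, acting on functions on `C(k+1)` and producing a function
on `C(k)`. -/
def upOp (C : Finset (Finset E)) (d : ℕ) (pid : Finset E → ℝ) (k : ℕ) :
    (Finset E → ℝ) → Finset E → ℝ :=
  upWith (piLev C d pid (k+1)) (faces C (k+1))

/-- The down operator `P_k^↓` (uniform removal of an element), acting on functions
on `C(k-1)` and producing a function on `C(k)`. -/
def downOp (k : ℕ) (g : Finset E → ℝ) (S : Finset E) : ℝ :=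
  (1 / (k : ℝ)) * ∑ i ∈ S, g (S.erase i)

/-- The down-up walk `P_k^∨ = P_k^↓ P_{k-1}^↑` on `C(k)`, as an operator on functions. -/
def downUp (C : Finset (Finset E)) (d : ℕ) (pid : Finset E → ℝ) (k : ℕ)
    (f : Finset E → ℝ) : Finset E → ℝ :=
  downOp k (upOp C d pid (k-1) f)

/-- The up-down walk `P_k^∧ = P_k^↑ P_{k+1}^↓` on `C(k)`, as an operator on functions. -/
def upDown (C : Finset (Finset E)) (d : ℕ) (pid : Finset E → ℝ) (k : ℕ)
    (f : Finset E → ℝ) : Finset E → ℝ :=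
  upOp C d pid k (downOp (k+1) f)

/-- The up operator `P_{S,k}^↑` on the link of `S`, acting on functions on `C_S(k+1)`
and producing a function on `C_S(k)`. -/
def linkUp (C : Finset (Finset E)) (d : ℕ) (pid : Finset E → ℝ) (S : Finset E) (k : ℕ) :
    (Finset E → ℝ) → Finset E → ℝ :=
  upWith (linkPi C d pid S (k+1)) (linkFaces C S (k+1))

/-- The up-down walk `P_{S,k}^∧` on the level-`k` faces of the link of `S`. -/
def linkUpDown (C : Finset (Finset E)) (d : ℕ) (pid : Finset E → ℝ) (S : Finset E) (k : ℕ)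
    (f : Finset E → ℝ) : Finset E → ℝ :=
  linkUp C d pid S k (downOp (k+1) f)

/-- The local walk `G_S := 2 P_{S,1}^∧ - I` on the vertices of the link of `S`. -/
def localWalk (C : Finset (Finset E)) (d : ℕ) (pid : Finset E → ℝ) (S : Finset E)
    (f : Finset E → ℝ) (T : Finset E) : ℝ :=
  2 * linkUpDown C d pid S 1 f T - f T

/-- Variance of `f` with respect to the measure `μ` on `dom`. -/
def pVar (μ : Finset E → ℝ) (dom : Finset (Finset E)) (f : Finset E → ℝ) : ℝ :=
  (∑ x ∈ dom, μ x * f x ^ 2) - (∑ x ∈ dom, μ x * f x) ^ 2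

/-- Relative entropy `Ent_μ(f) = E_μ[f log f] - E_μ[f] log E_μ[f]` of `f` with respect to
the measure `μ` on `dom` (note `Real.log 0 = 0`, giving the convention `0 log 0 = 0`). -/
def pEnt (μ : Finset E → ℝ) (dom : Finset (Finset E)) (f : Finset E → ℝ) : ℝ :=
  (∑ x ∈ dom, μ x * (f x * Real.log (f x))) -
    (∑ x ∈ dom, μ x * f x) * Real.log (∑ x ∈ dom, μ x * f x)

/-- The Dirichlet form `𝔈_P(f,g) = Σ_x μ(x) f(x) ((I - P) g)(x)` of a Markov operator `P`
reversible with respect to `μ` on `dom`. -/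
def pDiri (μ : Finset E → ℝ) (dom : Finset (Finset E))
    (P : (Finset E → ℝ) → Finset E → ℝ) (f g : Finset E → ℝ) : ℝ :=
  ∑ x ∈ dom, μ x * f x * (g x - P g x)

/-- The second largest eigenvalue of a Markov operator `P` reversible with respect to the
distribution `μ` on `dom`, via the variational characterisation: the supremum of Rayleigh
quotients `⟨f, Pf⟩_μ / ⟨f, f⟩_μ` over `f` orthogonal to the constants in `L²(μ)`. -/
noncomputable def lamTwo (μ : Finset E → ℝ) (dom : Finset (Finset E))
    (P : (Finset E → ℝ) → Finset E → ℝ) : ℝ :=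
  sSup {r : ℝ | ∃ f : Finset E → ℝ,
    (∑ x ∈ dom, μ x * f x = 0) ∧ (∑ x ∈ dom, μ x * f x ^ 2 ≠ 0) ∧
    r = (∑ x ∈ dom, μ x * f x * P f x) / ∑ x ∈ dom, μ x * f x ^ 2}

/-- The modified log-Sobolev constant `ρ(P)` of a Markov operator `P` reversible with
respect to `μ` on `dom`. -/
noncomputable def mlsConst (μ : Finset E → ℝ) (dom : Finset (Finset E))
    (P : (Finset E → ℝ) → Finset E → ℝ) : ℝ :=
  sInf {r : ℝ | ∃ f : Finset E → ℝ, (∀ x ∈ dom, 0 < f x) ∧ pEnt μ dom f ≠ 0 ∧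
    r = pDiri μ dom P f (fun x => Real.log (f x)) / pEnt μ dom f}

set_option linter.unusedSectionVars false

/-! ### Weighted graphs: the spectral part of the trickling-down argument -/

/-- The second-eigenvalue bound `λ₂ ≤ lam` for the walk with vertex weights `u` and symmetric
edge weights `v` of row sums `D * u i`, as an inequality of quadratic forms on the functions
orthogonal to constants. No division by `u` occurs, so vanishing weights are harmless. -/
def LocSpec (u : E → ℝ) (v : E → E → ℝ) (D lam : ℝ) : Prop :=
  ∀ g : E → ℝ, ∑ i, u i * g i = 0 →
    ∑ i, ∑ l, v i l * (g i * g l) ≤ lam * D * ∑ i, u i * g i ^ 2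

/-- Vertex weights `u` and symmetric nonnegative edge weights `v` with row sums `D * u i`. -/
structure WGraph (u : E → ℝ) (v : E → E → ℝ) (D : ℝ) : Prop where
  unn : ∀ i, 0 ≤ u i
  vnn : ∀ i l, 0 ≤ v i l
  symm : ∀ i l, v i l = v l i
  row : ∀ i, ∑ l, v i l = D * u i

theorem WGraph.sum_left {u : E → ℝ} {v : E → E → ℝ} {D : ℝ} (h : WGraph u v D) (f : E → ℝ) :
    ∑ i, ∑ l, v i l * f i = D * ∑ i, u i * f i := by
  simp_rw [← Finset.sum_mul, h.row, Finset.mul_sum, mul_assoc]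

theorem WGraph.sum_right {u : E → ℝ} {v : E → E → ℝ} {D : ℝ} (h : WGraph u v D) (f : E → ℝ) :
    ∑ i, ∑ l, v i l * f l = D * ∑ i, u i * f i := by
  rw [Finset.sum_comm, ← h.sum_left]
  exact Finset.sum_congr rfl fun i _ => Finset.sum_congr rfl fun l _ => by rw [h.symm]

theorem WGraph.quad_le {u : E → ℝ} {v : E → E → ℝ} {D : ℝ} (h : WGraph u v D) (g : E → ℝ) :
    ∑ i, ∑ l, v i l * (g i * g l) ≤ D * ∑ i, u i * g i ^ 2 := by
  have h1 : 0 ≤ ∑ i, ∑ l, v i l * (g i - g l) ^ 2 :=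
    Finset.sum_nonneg fun i _ => Finset.sum_nonneg fun l _ => mul_nonneg (h.vnn i l) (sq_nonneg _)
  have h2 : ∑ i, ∑ l, v i l * (g i - g l) ^ 2 = ∑ i, ∑ l, v i l * g i ^ 2
      + ∑ i, ∑ l, v i l * g l ^ 2 - 2 * ∑ i, ∑ l, v i l * (g i * g l) := by
    simp_rw [Finset.mul_sum, ← Finset.sum_add_distrib, ← Finset.sum_sub_distrib]
    exact Finset.sum_congr rfl fun i _ => Finset.sum_congr rfl fun l _ => by ring
  rw [h.sum_left (fun i => g i ^ 2), h.sum_right (fun i => g i ^ 2)] at h2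
  linarith

theorem WGraph.neg_le_quad {u : E → ℝ} {v : E → E → ℝ} {D : ℝ} (h : WGraph u v D) (g : E → ℝ) :
    -(D * ∑ i, u i * g i ^ 2) ≤ ∑ i, ∑ l, v i l * (g i * g l) := by
  have h1 : 0 ≤ ∑ i, ∑ l, v i l * (g i + g l) ^ 2 :=
    Finset.sum_nonneg fun i _ => Finset.sum_nonneg fun l _ => mul_nonneg (h.vnn i l) (sq_nonneg _)
  have h2 : ∑ i, ∑ l, v i l * (g i + g l) ^ 2 = ∑ i, ∑ l, v i l * g i ^ 2
      + ∑ i, ∑ l, v i l * g l ^ 2 + 2 * ∑ i, ∑ l, v i l * (g i * g l) := by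
    simp_rw [Finset.mul_sum, ← Finset.sum_add_distrib]
    exact Finset.sum_congr rfl fun i _ => Finset.sum_congr rfl fun l _ => by ring
  rw [h.sum_left (fun i => g i ^ 2), h.sum_right (fun i => g i ^ 2)] at h2
  linarith

/-- The bound of `LocSpec` for a function of arbitrary mean `m`. -/
theorem LocSpec.general {u : E → ℝ} {v : E → E → ℝ} {D lam : ℝ} (h : WGraph u v D)
    (hs : LocSpec u v D lam) (g : E → ℝ) (m : ℝ) (hm : (∑ i, u i) * m = ∑ i, u i * g i) :
    ∑ i, ∑ l, v i l * (g i * g l) ≤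
      D * (lam * ∑ i, u i * g i ^ 2 + (1 - lam) * ((∑ i, u i) * m ^ 2)) := by
  have h0 : ∑ i, u i * (g i - m) = 0 := by
    simp_rw [mul_sub, Finset.sum_sub_distrib, ← Finset.sum_mul]; linarith
  have h1 := hs (fun i => g i - m) h0
  have h2 : ∑ i, u i * (g i - m) ^ 2 = ∑ i, u i * g i ^ 2 - 2 * m * ∑ i, u i * g i
      + m ^ 2 * ∑ i, u i := by
    simp_rw [Finset.mul_sum, ← Finset.sum_sub_distrib, ← Finset.sum_add_distrib]
    exact Finset.sum_congr rfl fun i _ => by ring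
  have h3 : ∑ i, ∑ l, v i l * ((g i - m) * (g l - m)) = ∑ i, ∑ l, v i l * (g i * g l)
      - m * ∑ i, ∑ l, v i l * g i - m * ∑ i, ∑ l, v i l * g l + m ^ 2 * ∑ i, ∑ l, v i l * 1 := by
    simp_rw [Finset.mul_sum, ← Finset.sum_sub_distrib, ← Finset.sum_add_distrib]
    exact Finset.sum_congr rfl fun i _ => Finset.sum_congr rfl fun l _ => by ring
  rw [h.sum_left, h.sum_right, h.sum_left (fun _ => 1)] at h3
  simp only [mul_one] at h3
  rw [h2, h3, ← hm] at h1
  linarith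

/-- One improvement step: a valid bound `lam < 1` yields a new valid bound, which is strictly
smaller unless `lam ≤ mu / (1 - mu)`. It plays the role of testing the hypothesis on a top
eigenfunction, without having to produce one: for `h = lam • f - G f` positivity of the form
`lam - G` at `f - h / 2` gives `‖h‖² ≤ 2 ⟨f, (lam - G) f⟩`, so a near-maximiser of the Rayleigh
quotient is nearly an eigenfunction. -/
theorem trickle_step {u : E → ℝ} {v : E → E → ℝ} {D mu lam : ℝ} (h : WGraph u v D) (hD : 0 < D)
    (hmu1 : mu < 1) (hlam1 : lam < 1)
    (hs : LocSpec u v D lam)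
    (hq : ∀ f : E → ℝ, ∑ i, ∑ l, v i l * (f i * f l) ≤
      D * (mu * ∑ i, u i * f i ^ 2
        + (1 - mu) * ∑ i, u i * ((∑ l, v i l * f l) / (D * u i)) ^ 2)) :
    LocSpec u v D ((mu + (1 - mu) * (2 * lam - lam ^ 2)) / (1 + 2 * (1 - mu) * (1 - lam))) := by
  intro f hf
  set G : E → ℝ := fun i => (∑ l, v i l * f l) / (D * u i) with hG
  -- `u i = 0` forces the whole row `v i` to vanish, so the division is harmless.
  have hGu : ∀ i, D * (u i * G i) = ∑ l, v i l * f l := by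
    intro i
    by_cases hi : u i = 0
    · have hr := h.row i
      rw [hi, mul_zero, Finset.sum_eq_zero_iff_of_nonneg (fun l _ => h.vnn i l)] at hr
      rw [hi, zero_mul, mul_zero, Finset.sum_eq_zero]
      intro l hl
      rw [hr l hl, zero_mul]
    · simp only [hG]
      field_simp
  set hh : E → ℝ := fun i => lam * f i - G i with hhd
  set N := ∑ i, u i * f i ^ 2 with hN
  set Q := ∑ i, ∑ l, v i l * (f i * f l) with hQ
  set H := ∑ i, u i * hh i ^ 2 with hH
  have hN0 : 0 ≤ N := Finset.sum_nonneg fun i _ => mul_nonneg (h.unn i) (sq_nonneg _)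
  have hH0 : 0 ≤ H := Finset.sum_nonneg fun i _ => mul_nonneg (h.unn i) (sq_nonneg _)
  have hGf : ∀ g : E → ℝ, ∑ i, ∑ l, v i l * (g i * f l) = D * ∑ i, u i * (g i * G i) := by
    intro g
    rw [Finset.mul_sum]
    refine Finset.sum_congr rfl fun i _ => ?_
    rw [show D * (u i * (g i * G i)) = g i * (D * (u i * G i)) by ring, hGu, Finset.mul_sum]
    exact Finset.sum_congr rfl fun l _ => by ring
  have hGm : ∑ i, u i * G i = 0 := by
    have h1 := hGf (fun _ => 1)
    simp only [one_mul] at h1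
    rw [h.sum_right, hf, mul_zero] at h1
    exact (mul_eq_zero.1 h1.symm).resolve_left hD.ne'
  have hfG : Q = D * ∑ i, u i * (f i * G i) := hGf f
  have hhm : ∑ i, u i * hh i = 0 := by
    have : ∑ i, u i * hh i = lam * ∑ i, u i * f i - ∑ i, u i * G i := by
      rw [Finset.mul_sum, ← Finset.sum_sub_distrib]
      exact Finset.sum_congr rfl fun i _ => by simp only [hhd]; ring
    rw [this, hf, hGm]; ring
  have hfh : ∑ i, u i * (f i * hh i) = lam * N - ∑ i, u i * (f i * G i) := by
    rw [hN, Finset.mul_sum, ← Finset.sum_sub_distrib]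
    exact Finset.sum_congr rfl fun i _ => by simp only [hhd]; ring
  have hHe : H = lam * ∑ i, u i * (f i * hh i) - ∑ i, u i * (hh i * G i) := by
    rw [hH, Finset.mul_sum, ← Finset.sum_sub_distrib]
    exact Finset.sum_congr rfl fun i _ => by simp only [hhd]; ring
  have hGG : ∑ i, u i * G i ^ 2 = lam ^ 2 * N - 2 * lam * ∑ i, u i * (f i * hh i) + H := by
    rw [hN, hH, Finset.mul_sum, Finset.mul_sum, ← Finset.sum_sub_distrib,
      ← Finset.sum_add_distrib]
    exact Finset.sum_congr rfl fun i _ => by simp only [hhd]; ring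
  have hkey := hs (fun i => f i - hh i / 2) (by
    have : ∑ i, u i * (f i - hh i / 2) = ∑ i, u i * f i - (∑ i, u i * hh i) / 2 := by
      rw [Finset.sum_div, ← Finset.sum_sub_distrib]
      exact Finset.sum_congr rfl fun i _ => by ring
    rw [this, hf, hhm]; ring)
  have e1 : ∑ i, u i * (f i - hh i / 2) ^ 2 = N - ∑ i, u i * (f i * hh i) + H / 4 := by
    rw [hN, hH, Finset.sum_div, ← Finset.sum_sub_distrib, ← Finset.sum_add_distrib]
    exact Finset.sum_congr rfl fun i _ => by ring
  have e2 : ∑ i, ∑ l, v i l * ((f i - hh i / 2) * (f l - hh l / 2)) =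
      Q - (∑ i, ∑ l, v i l * (hh i * f l)) / 2 - (∑ i, ∑ l, v i l * (f i * hh l)) / 2
        + (∑ i, ∑ l, v i l * (hh i * hh l)) / 4 := by
    rw [hQ]
    simp_rw [Finset.sum_div, ← Finset.sum_sub_distrib, ← Finset.sum_add_distrib]
    exact Finset.sum_congr rfl fun i _ => Finset.sum_congr rfl fun l _ => by ring
  have e3 : ∑ i, ∑ l, v i l * (f i * hh l) = ∑ i, ∑ l, v i l * (hh i * f l) := by
    rw [Finset.sum_comm]
    exact Finset.sum_congr rfl fun i _ => Finset.sum_congr rfl fun l _ => by rw [h.symm]; ring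
  have hlow := h.neg_le_quad hh
  rw [← hH] at hlow
  rw [e1, e2, e3, hGf hh] at hkey
  have hq' := hq f
  change Q ≤ D * (mu * N + (1 - mu) * ∑ i, u i * G i ^ 2) at hq'
  rw [hGG] at hq'
  set X := ∑ i, u i * (f i * hh i)
  set Y := ∑ i, u i * (f i * G i)
  set Z := ∑ i, u i * (hh i * G i)
  have hHX : H ≤ 2 * X := by
    have : D * H ≤ D * (2 * X) := by
      have hz : Z = lam * X - H := by linarith
      have hy : Y = lam * N - X := by linarith
      rw [hfG, hy, hz] at hkey
      have : 0 ≤ (1 - lam) * (D * H) := by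
        apply mul_nonneg <;> [linarith; positivity]
      linarith
    exact le_of_mul_le_mul_left this hD
  have hpos : 0 < 1 + 2 * (1 - mu) * (1 - lam) := by
    have := mul_pos (sub_pos.2 hmu1) (sub_pos.2 hlam1)
    linarith
  have hfin : Q * (1 + 2 * (1 - mu) * (1 - lam)) ≤
      (mu + (1 - mu) * (2 * lam - lam ^ 2)) * (D * N) := by
    have h5 : D * ((1 - mu) * H) ≤ D * ((1 - mu) * (2 * X)) := by
      apply mul_le_mul_of_nonneg_left _ hD.le
      exact mul_le_mul_of_nonneg_left hHX (by linarith)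
    have hX : D * X = lam * (D * N) - Q := by rw [hfh, hfG]; ring
    have h6 : D * (mu * N + (1 - mu) * (lam ^ 2 * N - 2 * lam * X + H)) ≤
        mu * (D * N) + (1 - mu) * (lam ^ 2 * (D * N) + (2 - 2 * lam) * (D * X)) := by
      linarith
    rw [hX] at h6
    linarith
  rw [mul_assoc, div_mul_eq_mul_div, le_div_iff₀ hpos]
  exact hfin

/-- The abstract trickling-down step: if the form of the walk `G` satisfies
`G ≤ mu + (1 - mu) G²` and `λ₂(G) < 1`, then `λ₂(G) ≤ mu / (1 - mu)`. -/
theorem trickle {u : E → ℝ} {v : E → E → ℝ} {D mu lam : ℝ} (h : WGraph u v D) (hD : 0 < D)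
    (hmu0 : 0 ≤ mu) (hmu1 : mu < 1) (hlam1 : lam < 1)
    (hs : LocSpec u v D lam)
    (hq : ∀ f : E → ℝ, ∑ i, ∑ l, v i l * (f i * f l) ≤
      D * (mu * ∑ i, u i * f i ^ 2
        + (1 - mu) * ∑ i, u i * ((∑ l, v i l * f l) / (D * u i)) ^ 2)) :
    LocSpec u v D (mu / (1 - mu)) := by
  have hNN : ∀ g : E → ℝ, 0 ≤ D * ∑ i, u i * g i ^ 2 := fun g =>
    mul_nonneg hD.le (Finset.sum_nonneg fun i _ => mul_nonneg (h.unn i) (sq_nonneg _))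
  have mono : ∀ {a b : ℝ}, a ≤ b → LocSpec u v D a → LocSpec u v D b := by
    intro a b hab ha g hg
    refine (ha g hg).trans ?_
    rw [mul_assoc, mul_assoc]
    exact mul_le_mul_of_nonneg_right hab (hNN g)
  -- The least nonnegative valid bound cannot be improved by `trickle_step`.
  set s : Set ℝ := {x | 0 ≤ x ∧ LocSpec u v D x} with hsdef
  have hmem : max lam 0 ∈ s := ⟨le_max_right _ _, mono (le_max_left _ _) hs⟩
  have hbdd : BddBelow s := ⟨0, fun x hx => hx.1⟩
  set L := sInf s with hL
  have hL0 : 0 ≤ L := le_csInf ⟨_, hmem⟩ fun x hx => hx.1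
  have hL1 : L < 1 := (csInf_le hbdd hmem).trans_lt (max_lt hlam1 one_pos)
  have hLs : LocSpec u v D L := by
    intro g hg
    rcases (hNN g).eq_or_lt with h0 | h0
    · have := hmem.2 g hg
      rw [mul_assoc, ← h0] at this ⊢
      simpa using this
    · rw [mul_assoc, ← div_le_iff₀ h0]
      refine le_csInf ⟨_, hmem⟩ fun x hx => ?_
      rw [div_le_iff₀ h0, ← mul_assoc]
      exact hx.2 g hg
  have hstep := trickle_step h hD hmu1 hL1 hLs hq
  have hpos : 0 < 1 + 2 * (1 - mu) * (1 - L) := by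
    have := mul_pos (sub_pos.2 hmu1) (sub_pos.2 hL1)
    linarith
  have hle : L ≤ (mu + (1 - mu) * (2 * L - L ^ 2)) / (1 + 2 * (1 - mu) * (1 - L)) := by
    refine csInf_le hbdd ⟨div_nonneg ?_ hpos.le, hstep⟩
    have h1 : 0 ≤ 2 * L - L ^ 2 := by nlinarith
    have := mul_nonneg (sub_pos.2 hmu1).le h1
    linarith
  rw [le_div_iff₀ hpos] at hle
  refine mono ?_ hLs
  rw [le_div_iff₀ (by linarith)]
  have h2 : (1 - L) * (L * (1 - mu)) ≤ (1 - L) * mu := by nlinarith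
  exact le_of_mul_le_mul_left h2 (by linarith)

/-! ### Weight systems on subsets and their links -/

/-- A nonnegative weight on all subsets of `E` such that the weights of the sets covering `S`
sum to `(d - |S|) * w S`. The instance of interest is `wgt`, the unnormalised form of the
family `π_k`, which vanishes off the complex. -/
structure WSys (w : Finset E → ℝ) (d : ℕ) : Prop where
  nn : ∀ S, 0 ≤ w S
  cover : ∀ S, ∑ i ∈ Sᶜ, w (insert i S) = ((d : ℝ) - S.card) * w S

/-- Vertex weights of the link of `R`, extended by zero to `R`. -/
def lu (w : Finset E → ℝ) (R : Finset E) (i : E) : ℝ :=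
  if i ∈ R then 0 else w (insert i R)

/-- Edge weights of the link of `R`, extended by zero to loops and to pairs meeting `R`. -/
def lv (w : Finset E → ℝ) (R : Finset E) (i l : E) : ℝ :=
  if i ∈ R then 0 else lu w (insert i R) l

theorem sum_lu (w : Finset E → ℝ) (R : Finset E) (f : E → ℝ) :
    ∑ i, lu w R i * f i = ∑ i ∈ Rᶜ, w (insert i R) * f i := by
  rw [← Finset.sum_subset (Finset.subset_univ Rᶜ)]
  · refine Finset.sum_congr rfl fun i hi => ?_
    rw [lu, if_neg (Finset.mem_compl.1 hi)]
  · intro i _ hi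
    rw [lu, if_pos (by simpa using hi), zero_mul]

theorem lv_comm (w : Finset E → ℝ) (R : Finset E) (i l : E) : lv w R i l = lv w R l i := by
  unfold lv lu
  by_cases h1 : i ∈ R <;> by_cases h2 : l ∈ R <;> by_cases h3 : i = l <;>
    simp [h1, h2, h3, eq_comm, Finset.insert_comm]

variable {w : Finset E → ℝ} {d : ℕ}

theorem WSys.lu_nonneg (h : WSys w d) (R : Finset E) (i : E) : 0 ≤ lu w R i := by
  unfold lu; split_ifs <;> [rfl; exact h.nn _]

theorem WSys.sum_lu_one (h : WSys w d) (R : Finset E) :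
    ∑ i, lu w R i = ((d : ℝ) - R.card) * w R := by
  have := sum_lu w R (fun _ => 1)
  simp only [mul_one] at this
  rw [this, h.cover]

theorem WSys.row (h : WSys w d) (R : Finset E) (i : E) :
    ∑ l, lv w R i l = ((d : ℝ) - R.card - 1) * lu w R i := by
  unfold lv
  by_cases hi : i ∈ R
  · simp [hi, lu]
  · simp only [hi, if_false]
    rw [h.sum_lu_one, Finset.card_insert_of_notMem hi, lu, if_neg hi]
    push_cast; ring

theorem WSys.wgraph (h : WSys w d) (R : Finset E) :
    WGraph (lu w R) (lv w R) ((d : ℝ) - R.card - 1) where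
  unn := h.lu_nonneg R
  vnn i l := by unfold lv; split_ifs <;> [rfl; exact h.lu_nonneg _ _]
  symm := lv_comm w R
  row := h.row R

theorem lu_swap (w : Finset E → ℝ) (R : Finset E) (x i : E) :
    (if x ∈ R then 0 else lu w (insert x R) i) = if i ∈ R then 0 else lu w (insert i R) x :=
  lv_comm w R x i

theorem lv_rotate (w : Finset E → ℝ) (R : Finset E) (x i l : E) :
    (if x ∈ R then 0 else lv w (insert x R) i l) =
      if i ∈ R then 0 else if l ∈ insert i R then 0 else lu w (insert l (insert i R)) x := by
  have h1 : (if x ∈ R then 0 else lv w (insert x R) i l) =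
      if i ∈ R then 0 else lv w (insert i R) x l := by
    unfold lv
    by_cases h3 : i = x
    · rw [h3]
    · have h4 : x ≠ i := Ne.symm h3
      by_cases h1 : i ∈ R <;> by_cases h2 : x ∈ R <;>
        simp [h1, h2, h3, h4, Finset.insert_comm i x R]
  rw [h1, lv_comm w (insert i R)]
  rfl

/-- Garland's identity: the edge form of a link is the average of the edge forms of the links
one level above. -/
theorem WSys.sum_quad_link (h : WSys w d) (R : Finset E) (f : E → ℝ) :
    ∑ x ∈ Rᶜ, ∑ i, ∑ l, lv w (insert x R) i l * (f i * f l) =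
      ((d : ℝ) - R.card - 2) * ∑ i, ∑ l, lv w R i l * (f i * f l) := by
  have h1 : ∑ x ∈ Rᶜ, ∑ i, ∑ l, lv w (insert x R) i l * (f i * f l) =
      ∑ x, ∑ i, ∑ l, (if x ∈ R then 0 else lv w (insert x R) i l) * (f i * f l) := by
    rw [← Finset.sum_subset (Finset.subset_univ Rᶜ)]
    · refine Finset.sum_congr rfl fun x hx => ?_
      simp only [if_neg (Finset.mem_compl.1 hx)]
    · intro x _ hx
      have hx' : x ∈ R := by simpa using hx
      simp [hx']
  simp_rw [h1, lv_rotate, Finset.mul_sum]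
  rw [Finset.sum_comm]
  refine Finset.sum_congr rfl fun i _ => ?_
  rw [Finset.sum_comm]
  refine Finset.sum_congr rfl fun l _ => ?_
  rw [← Finset.sum_mul, ← mul_assoc ((d : ℝ) - R.card - 2)]
  congr 1
  unfold lv
  by_cases hi : i ∈ R
  · simp [hi]
  · by_cases hl : l ∈ insert i R
    · simp only [hi, hl, if_true, if_false, lu]; simp
    · simp only [hi, hl, if_false]
      rw [h.sum_lu_one, Finset.card_insert_of_notMem hl, Finset.card_insert_of_notMem hi,
        lu, if_neg hl]
      push_cast; ring

/-- Trickling down from the links of the sets `R ∪ {x}` to the link of `R`. -/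
theorem WSys.trickle_link (h : WSys w d) (R : Finset E) (hR : R.card + 3 ≤ d) {mu lam : ℝ}
    (hmu0 : 0 ≤ mu) (hmu1 : mu < 1) (hlam1 : lam < 1)
    (hs : LocSpec (lu w R) (lv w R) ((d : ℝ) - R.card - 1) lam)
    (hup : ∀ x, x ∉ R →
      LocSpec (lu w (insert x R)) (lv w (insert x R)) ((d : ℝ) - R.card - 2) mu) :
    LocSpec (lu w R) (lv w R) ((d : ℝ) - R.card - 1) (mu / (1 - mu)) := by
  have hd : (R.card : ℝ) + 3 ≤ d := by exact_mod_cast hR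
  refine trickle (h.wgraph R) (by linarith) hmu0 hmu1 hlam1 hs fun f => ?_
  set G : E → ℝ := fun i => (∑ l, lv w R i l * f l) / (((d : ℝ) - R.card - 1) * lu w R i) with hG
  have hloc : ∀ x ∈ Rᶜ, ∑ i, ∑ l, lv w (insert x R) i l * (f i * f l) ≤
      ((d : ℝ) - R.card - 2) * (mu * ∑ i, lu w (insert x R) i * f i ^ 2 +
        (1 - mu) * (((d : ℝ) - R.card - 1) * (lu w R x * G x ^ 2))) := by
    intro x hx
    have hx' : x ∉ R := Finset.mem_compl.1 hx
    have hW := h.row R x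
    have hg := h.wgraph (insert x R)
    rw [Finset.card_insert_of_notMem hx'] at hg
    push_cast at hg
    rw [show (d : ℝ) - (R.card + 1) - 1 = (d : ℝ) - R.card - 2 by ring] at hg
    have hlv : ∀ l, lv w R x l = lu w (insert x R) l := fun l => by rw [lv, if_neg hx']
    simp only [hlv] at hW
    have hm : (∑ i, lu w (insert x R) i) * G x = ∑ i, lu w (insert x R) i * f i := by
      rw [hW]
      simp only [hG, hlv]
      by_cases h0 : lu w R x = 0
      · rw [h0, mul_zero, Finset.sum_eq_zero_iff_of_nonneg (fun l _ => h.lu_nonneg _ l)] at hW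
        rw [h0, mul_zero, zero_mul, Finset.sum_eq_zero]
        intro l hl
        rw [hW l hl, zero_mul]
      · have : (d : ℝ) - R.card - 1 ≠ 0 := by linarith
        field_simp
    have := LocSpec.general hg (hup x hx') f (G x) hm
    rw [hW] at this
    rw [← mul_assoc ((d : ℝ) - R.card - 1)]
    exact this
  have hsum := Finset.sum_le_sum hloc
  rw [h.sum_quad_link, ← Finset.mul_sum, Finset.sum_add_distrib, ← Finset.mul_sum,
    ← Finset.mul_sum, ← Finset.mul_sum] at hsum
  have e1 : ∑ x ∈ Rᶜ, ∑ i, lu w (insert x R) i * f i ^ 2 =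
      ((d : ℝ) - R.card - 1) * ∑ i, lu w R i * f i ^ 2 := by
    rw [← (h.wgraph R).sum_right (fun i => f i ^ 2)]
    rw [← Finset.sum_subset (Finset.subset_univ Rᶜ)]
    · refine Finset.sum_congr rfl fun x hx => ?_
      simp only [lv, if_neg (Finset.mem_compl.1 hx)]
    · intro x _ hx
      have hx' : x ∈ R := by simpa using hx
      simp [lv, hx']
  have e2 : ∑ x ∈ Rᶜ, lu w R x * G x ^ 2 = ∑ x, lu w R x * G x ^ 2 := by
    refine Finset.sum_subset (Finset.subset_univ Rᶜ) ?_
    intro x _ hx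
    have hx' : x ∈ R := by simpa using hx
    simp [lu, hx']
  rw [e1, e2] at hsum
  have := le_of_mul_le_mul_left hsum (by linarith)
  refine this.trans (le_of_eq ?_)
  ring

/-- The trickling-down profile: the bound `γ` on the links of the sets of size `d - 2` yields
`γ / (1 - (d - 2 - j) γ)` on the links of the sets of size `j`; here `n = d - 2 - j`. -/
theorem WSys.profile (h : WSys w d) {γ : ℝ} (hγ0 : 0 ≤ γ) (hγ1 : ((d : ℝ) - 1) * γ ≤ 1)
    (htop : ∀ R : Finset E, R.card + 2 = d →
      LocSpec (lu w R) (lv w R) ((d : ℝ) - R.card - 1) γ)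
    (hconn : ∀ R : Finset E, R.card + 2 ≤ d →
      ∃ lam < 1, LocSpec (lu w R) (lv w R) ((d : ℝ) - R.card - 1) lam)
    (n : ℕ) : ∀ R : Finset E, R.card + 2 + n = d →
      LocSpec (lu w R) (lv w R) ((d : ℝ) - R.card - 1) (γ / (1 - n * γ)) := by
  induction n with
  | zero =>
    intro R hR
    simpa using htop R hR
  | succ n ih =>
    intro R hR
    obtain ⟨lam, hl1, hls⟩ := hconn R (by omega)
    have hd : (R.card : ℝ) + 2 + (n + 1) = d := by exact_mod_cast hR
    have hRn : (0 : ℝ) ≤ R.card := Nat.cast_nonneg _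
    have hnn : (0 : ℝ) ≤ n := Nat.cast_nonneg _
    -- `(n + 1) γ ≤ (d - 2) γ < 1` because `(d - 1) γ ≤ 1`.
    have hlt : ((n : ℝ) + 1) * γ < 1 := by
      rcases hγ0.eq_or_lt with h0 | h0
      · rw [← h0]; simp
      · have : ((n : ℝ) + 1) * γ < ((d : ℝ) - 1) * γ :=
          mul_lt_mul_of_pos_right (by linarith) h0
        linarith
    have hpos : 0 < 1 - n * γ := by linarith
    have hpos2 : 0 < 1 - (n + 1) * γ := by linarith
    have := h.trickle_link R (by omega) (mu := γ / (1 - n * γ)) (lam := lam)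
      (div_nonneg hγ0 hpos.le) (by rw [div_lt_one hpos]; linarith) hl1 hls (by
        intro x hx
        have hc := Finset.card_insert_of_notMem hx
        have := ih (insert x R) (by omega)
        rw [hc] at this
        push_cast at this
        rwa [show (d : ℝ) - (R.card + 1) - 1 = (d : ℝ) - R.card - 2 by ring] at this)
    convert this using 1
    have h3 : 1 - n * γ - γ ≠ 0 := by intro h; linarith
    have h4 : (1 - γ / (1 - n * γ)) = (1 - n * γ - γ) / (1 - n * γ) := by
      rw [eq_div_iff hpos.ne', sub_mul, div_mul_cancel₀ _ hpos.ne', one_mul]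
    rw [h4, div_div_div_cancel_right₀ hpos.ne']
    push_cast
    congr 1
    ring

/-! ### Up and down operators on the levels -/

/-- The sets of size `k`. For the weight `wgt`, which vanishes off the complex, weighted sums over
this level agree with weighted sums over `C(k)`. -/
def lev (E : Type*) [Fintype E] (k : ℕ) : Finset (Finset E) := Finset.univ.powersetCard k

theorem mem_lev {k : ℕ} {S : Finset E} : S ∈ lev E k ↔ S.card = k := by
  simp [lev, Finset.mem_powersetCard]

/-- Double counting of the covering pairs between two consecutive levels. -/
theorem sum_lev_succ (k : ℕ) (φ : Finset E → E → ℝ) :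
    ∑ S ∈ lev E (k + 1), ∑ i ∈ S, φ S i = ∑ R ∈ lev E k, ∑ i ∈ Rᶜ, φ (insert i R) i := by
  rw [Finset.sum_sigma', Finset.sum_sigma']
  refine Finset.sum_bij' (fun p _ => ⟨p.1.erase p.2, p.2⟩) (fun p _ => ⟨insert p.2 p.1, p.2⟩)
    ?_ ?_ ?_ ?_ ?_
  · rintro ⟨S, i⟩ h
    simp only [Finset.mem_sigma, mem_lev] at h ⊢
    refine ⟨by rw [Finset.card_erase_of_mem h.2, h.1]; rfl, by simp⟩
  · rintro ⟨R, i⟩ h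
    simp only [Finset.mem_sigma, mem_lev, Finset.mem_compl] at h ⊢
    exact ⟨by rw [Finset.card_insert_of_notMem h.2, h.1], by simp⟩
  · rintro ⟨S, i⟩ h
    simp only [Finset.mem_sigma, mem_lev] at h
    simp [Finset.insert_erase h.2]
  · rintro ⟨R, i⟩ h
    simp only [Finset.mem_sigma, mem_lev, Finset.mem_compl] at h
    simp [Finset.erase_insert h.2]
  · rintro ⟨S, i⟩ h
    simp only [Finset.mem_sigma, mem_lev] at h
    simp [Finset.insert_erase h.2]

/-- The up operator `P_k^↑` in terms of the unnormalised weight. -/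
def Uw (w : Finset E → ℝ) (d k : ℕ) (f : Finset E → ℝ) (R : Finset E) : ℝ :=
  (∑ i ∈ Rᶜ, w (insert i R) * f (insert i R)) / (((d : ℝ) - k) * w R)

theorem WSys.eq_zero (h : WSys w d) {R : Finset E} (hR : w R = 0) {i : E} (hi : i ∉ R) :
    w (insert i R) = 0 := by
  have h1 := h.cover R
  rw [hR, mul_zero, Finset.sum_eq_zero_iff_of_nonneg (fun i _ => h.nn _)] at h1
  exact h1 i (Finset.mem_compl.2 hi)

theorem WSys.Uw_eq (h : WSys w d) {k : ℕ} (hk : k < d) (f : Finset E → ℝ) (R : Finset E) :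
    ((d : ℝ) - k) * (w R * Uw w d k f R) = ∑ i ∈ Rᶜ, w (insert i R) * f (insert i R) := by
  have hd : (k : ℝ) < d := by exact_mod_cast hk
  by_cases h0 : w R = 0
  · rw [h0, zero_mul, mul_zero, Finset.sum_eq_zero]
    intro i hi
    rw [h.eq_zero h0 (Finset.mem_compl.1 hi), zero_mul]
  · have : (d : ℝ) - k ≠ 0 := by linarith
    unfold Uw
    field_simp

theorem down_eq (k : ℕ) (g : Finset E → ℝ) (S : Finset E) :
    ((k + 1 : ℕ) : ℝ) * downOp (k + 1) g S = ∑ i ∈ S, g (S.erase i) := by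
  unfold downOp
  have : ((k + 1 : ℕ) : ℝ) ≠ 0 := by positivity
  field_simp

theorem WSys.sum_erase (h : WSys w d) (k : ℕ) (g : Finset E → ℝ) :
    ∑ S ∈ lev E (k + 1), ∑ i ∈ S, w S * g (S.erase i) =
      ((d : ℝ) - k) * ∑ R ∈ lev E k, w R * g R := by
  rw [sum_lev_succ k (fun S i => w S * g (S.erase i)), Finset.mul_sum]
  refine Finset.sum_congr rfl fun R hR => ?_
  rw [← mul_assoc, ← mem_lev.1 hR, ← h.cover R, Finset.sum_mul]
  refine Finset.sum_congr rfl fun i hi => ?_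
  rw [Finset.erase_insert (Finset.mem_compl.1 hi)]

theorem WSys.adj (h : WSys w d) {k : ℕ} (hk : k < d) (f g : Finset E → ℝ) :
    ∑ R ∈ lev E k, (((d : ℝ) - k) * w R) * (Uw w d k f R * g R) =
      ∑ S ∈ lev E (k + 1), (((k + 1 : ℕ) : ℝ) * w S) * (f S * downOp (k + 1) g S) := by
  have h1 : ∀ S, (((k + 1 : ℕ) : ℝ) * w S) * (f S * downOp (k + 1) g S) =
      ∑ i ∈ S, w S * f S * g (S.erase i) := by
    intro S
    rw [← Finset.mul_sum, ← down_eq]; ring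
  simp_rw [h1]
  rw [sum_lev_succ k (fun S i => w S * f S * g (S.erase i))]
  refine Finset.sum_congr rfl fun R _ => ?_
  rw [show (((d : ℝ) - k) * w R) * (Uw w d k f R * g R) =
    (((d : ℝ) - k) * (w R * Uw w d k f R)) * g R by ring, h.Uw_eq hk, Finset.sum_mul]
  refine Finset.sum_congr rfl fun i hi => ?_
  rw [Finset.erase_insert (Finset.mem_compl.1 hi)]

theorem WSys.down_mean (h : WSys w d) (k : ℕ) (g : Finset E → ℝ) :
    ∑ S ∈ lev E (k + 1), (((k + 1 : ℕ) : ℝ) * w S) * downOp (k + 1) g S =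
      ((d : ℝ) - k) * ∑ R ∈ lev E k, w R * g R := by
  rw [← h.sum_erase]
  refine Finset.sum_congr rfl fun S _ => ?_
  rw [← Finset.mul_sum, ← down_eq]; ring

theorem WSys.up_mean (h : WSys w d) {k : ℕ} (hk : k < d) (f : Finset E → ℝ) :
    ∑ R ∈ lev E k, (((d : ℝ) - k) * w R) * Uw w d k f R =
      ((k + 1 : ℕ) : ℝ) * ∑ S ∈ lev E (k + 1), w S * f S := by
  have h1 := h.adj hk f (fun _ => 1)
  simp only [mul_one] at h1
  rw [h1, Finset.mul_sum]
  refine Finset.sum_congr rfl fun S hS => ?_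
  have : downOp (k + 1) (fun _ => 1) S = 1 := by
    unfold downOp
    rw [Finset.sum_const, mem_lev.1 hS]
    have : ((k + 1 : ℕ) : ℝ) ≠ 0 := by positivity
    field_simp
    simp
  rw [this]; ring

theorem WSys.down_contr (h : WSys w d) (k : ℕ) (g : Finset E → ℝ) :
    ∑ S ∈ lev E (k + 1), (((k + 1 : ℕ) : ℝ) * w S) * downOp (k + 1) g S ^ 2 ≤
      ((d : ℝ) - k) * ∑ R ∈ lev E k, w R * g R ^ 2 := by
  rw [← h.sum_erase k (fun R => g R ^ 2)]
  refine Finset.sum_le_sum fun S hS => ?_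
  have hpos : (0 : ℝ) < ((k + 1 : ℕ) : ℝ) := by positivity
  have h1 : (∑ i ∈ S, g (S.erase i)) ^ 2 ≤ (S.card : ℝ) * ∑ i ∈ S, g (S.erase i) ^ 2 :=
    sq_sum_le_card_mul_sum_sq
  rw [mem_lev.1 hS, ← down_eq, mul_pow, pow_two, mul_assoc] at h1
  have h2 := le_of_mul_le_mul_left h1 hpos
  rw [← Finset.mul_sum, mul_comm (((k + 1 : ℕ) : ℝ)), mul_assoc]
  exact mul_le_mul_of_nonneg_left h2 (h.nn S)

/-- For adjoint operators `U`, `D` between weighted spaces, a bound on `‖U‖²` on the functions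
of mean zero is also a bound on `‖D‖²`. -/
theorem dual_bound {μ ν : Finset E → ℝ} {A B : Finset (Finset E)}
    {U D : (Finset E → ℝ) → Finset E → ℝ}
    (hν : ∀ x ∈ B, 0 ≤ ν x) (hμ : ∀ x ∈ A, 0 ≤ μ x)
    (adj : ∀ f g, ∑ x ∈ B, ν x * (U f x * g x) = ∑ x ∈ A, μ x * (f x * D g x))
    {a : ℝ} (ha : 0 ≤ a)
    (hU : ∀ f, ∑ x ∈ A, μ x * f x = 0 → ∑ x ∈ B, ν x * U f x ^ 2 ≤ a * ∑ x ∈ A, μ x * f x ^ 2)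
    (g : Finset E → ℝ) (hg : ∑ x ∈ A, μ x * D g x = 0) :
    ∑ x ∈ A, μ x * D g x ^ 2 ≤ a * ∑ x ∈ B, ν x * g x ^ 2 := by
  set X := ∑ x ∈ A, μ x * D g x ^ 2 with hX
  set Y := ∑ x ∈ B, ν x * g x ^ 2 with hY
  have hX0 : 0 ≤ X := Finset.sum_nonneg fun x hx => mul_nonneg (hμ x hx) (sq_nonneg _)
  have hY0 : 0 ≤ Y := Finset.sum_nonneg fun x hx => mul_nonneg (hν x hx) (sq_nonneg _)
  have h1 : ∑ x ∈ B, ν x * (U (D g) x * g x) = X := by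
    rw [adj, hX]
    exact Finset.sum_congr rfl fun x _ => by ring
  have h2 := hU (D g) hg
  have h3 : X ^ 2 ≤ (∑ x ∈ B, ν x * U (D g) x ^ 2) * Y := by
    rw [← h1]
    exact Finset.sum_sq_le_sum_mul_sum_of_sq_le_mul B
      (fun x hx => mul_nonneg (hν x hx) (sq_nonneg _))
      (fun x hx => mul_nonneg (hν x hx) (sq_nonneg _)) (fun x _ => le_of_eq (by ring))
  have h4 : X ^ 2 ≤ X * (a * Y) := by
    refine h3.trans ((mul_le_mul_of_nonneg_right h2 hY0).trans (le_of_eq ?_))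
    ring
  rcases hX0.eq_or_lt with h0 | h0
  · rw [← h0]; positivity
  · rw [pow_two] at h4
    exact le_of_mul_le_mul_left h4 h0

/-- `DualGap w d k c`: the up-down walk on the sets of size `k` has spectral gap at least `c`. -/
def DualGap (w : Finset E → ℝ) (d k : ℕ) (c : ℝ) : Prop :=
  ∀ g : Finset E → ℝ, ∑ R ∈ lev E k, w R * g R = 0 →
    ∑ S ∈ lev E (k + 1), (((k + 1 : ℕ) : ℝ) * w S) * downOp (k + 1) g S ^ 2 ≤
      (1 - c) * ∑ R ∈ lev E k, (((d : ℝ) - k) * w R) * g R ^ 2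

/-- `PrimalGap w d k c`: the down-up walk on the sets of size `k + 1` has spectral gap at
least `c`. -/
def PrimalGap (w : Finset E → ℝ) (d k : ℕ) (c : ℝ) : Prop :=
  ∀ f : Finset E → ℝ, ∑ S ∈ lev E (k + 1), w S * f S = 0 →
    ∑ R ∈ lev E k, (((d : ℝ) - k) * w R) * Uw w d k f R ^ 2 ≤
      (1 - c) * ∑ S ∈ lev E (k + 1), (((k + 1 : ℕ) : ℝ) * w S) * f S ^ 2

theorem WSys.primal_of_dual (h : WSys w d) {k : ℕ} (hk : k < d) {c : ℝ} (hc : c ≤ 1)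
    (hg : DualGap w d k c) : PrimalGap w d k c := by
  intro f hf
  have hd : (k : ℝ) < d := by exact_mod_cast hk
  refine dual_bound (μ := fun R => ((d : ℝ) - k) * w R) (ν := fun S => ((k + 1 : ℕ) : ℝ) * w S)
    (A := lev E k) (B := lev E (k + 1)) (U := downOp (k + 1)) (D := Uw w d k)
    (fun x _ => mul_nonneg (by positivity) (h.nn x))
    (fun x _ => mul_nonneg (by linarith) (h.nn x)) ?_ (a := 1 - c) (by linarith) ?_ f ?_
  · intro g f
    have := h.adj hk f g
    rw [show ∑ x ∈ lev E k, ((d : ℝ) - k) * w x * (g x * Uw w d k f x) =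
      ∑ x ∈ lev E k, ((d : ℝ) - k) * w x * (Uw w d k f x * g x) from
        Finset.sum_congr rfl fun x _ => by ring, this]
    exact Finset.sum_congr rfl fun x _ => by ring
  · intro g hg0
    refine hg g ?_
    simp_rw [mul_assoc, ← Finset.mul_sum] at hg0
    exact (mul_eq_zero.1 hg0).resolve_left (by linarith)
  · rw [h.up_mean hk, hf, mul_zero]

/-- Expansion of `‖P^↓ g‖²` into its diagonal part and the edge forms of the links two levels
below. -/
theorem WSys.down_sq (h : WSys w d) (m : ℕ) (g : Finset E → ℝ) :
    ∑ S ∈ lev E (m + 2), w S * (∑ i ∈ S, g (S.erase i)) ^ 2 =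
      ((d : ℝ) - (m + 1 : ℕ)) * ∑ R ∈ lev E (m + 1), w R * g R ^ 2 +
      ∑ R ∈ lev E m, ∑ j, ∑ i, lv w R j i * (g (insert j R) * g (insert i R)) := by
  have e1 : ∑ S ∈ lev E (m + 2), w S * (∑ i ∈ S, g (S.erase i)) ^ 2 =
      ∑ S ∈ lev E (m + 2), ∑ i ∈ S, w S * g (S.erase i) ^ 2 +
      ∑ S ∈ lev E (m + 2), ∑ i ∈ S, ∑ j ∈ S.erase i, w S * (g (S.erase i) * g (S.erase j)) := by
    rw [← Finset.sum_add_distrib]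
    refine Finset.sum_congr rfl fun S _ => ?_
    rw [← Finset.sum_add_distrib, pow_two, Finset.sum_mul, Finset.mul_sum]
    refine Finset.sum_congr rfl fun i hi => ?_
    rw [← Finset.mul_sum, ← Finset.mul_sum, ← Finset.add_sum_erase S (fun j => g (S.erase j)) hi]
    ring
  rw [e1, h.sum_erase (m + 1) (fun R => g R ^ 2)]
  congr 1
  rw [sum_lev_succ (m + 1)
    (fun S i => ∑ j ∈ S.erase i, w S * (g (S.erase i) * g (S.erase j)))]
  have e2 : ∑ R ∈ lev E (m + 1), ∑ i ∈ Rᶜ, ∑ j ∈ (insert i R).erase i,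
        w (insert i R) * (g ((insert i R).erase i) * g ((insert i R).erase j)) =
      ∑ R ∈ lev E (m + 1), ∑ j ∈ R, ∑ i ∈ Rᶜ,
        w (insert i R) * (g R * g ((insert i R).erase j)) := by
    refine Finset.sum_congr rfl fun R _ => ?_
    rw [Finset.sum_comm]
    refine Finset.sum_congr rfl fun i hi => ?_
    rw [Finset.erase_insert (Finset.mem_compl.1 hi)]
  rw [e2, sum_lev_succ m
    (fun R j => ∑ i ∈ Rᶜ, w (insert i R) * (g R * g ((insert i R).erase j)))]
  refine Finset.sum_congr rfl fun R _ => ?_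
  rw [← Finset.sum_subset (Finset.subset_univ Rᶜ)]
  · refine Finset.sum_congr rfl fun j hj => ?_
    have hj' := Finset.mem_compl.1 hj
    simp only [lv, if_neg hj']
    rw [sum_lu]
    refine Finset.sum_congr rfl fun i hi => ?_
    have hi' := Finset.mem_compl.1 hi
    rw [Finset.mem_insert, not_or] at hi'
    rw [Finset.insert_comm, Finset.erase_insert]
    simp [hj', Ne.symm hi'.1]
  · intro j _ hj
    have hj' : j ∈ R := by simpa using hj
    simp [lv, hj']

/-- One level of the local-to-global argument: a local bound `lam` on the links of the sets of
size `m` passes a gap `c` of the down-up walk on size `m + 1` on to the up-down walk on size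
`m + 1`, at the cost of the factor `(m + 1) / (m + 2) * (1 - lam)`. -/
theorem WSys.gap_step (h : WSys w d) {m : ℕ} (hm : m + 1 < d) {lam c : ℝ} (hlam : lam ≤ 1)
    (hs : ∀ R ∈ lev E m, LocSpec (lu w R) (lv w R) ((d : ℝ) - m - 1) lam)
    (hp : PrimalGap w d m c) :
    DualGap w d (m + 1) (((m : ℝ) + 1) / (m + 2) * (1 - lam) * c) := by
  intro g hg
  have hd : (m : ℝ) + 1 < d := by exact_mod_cast hm
  have hm0 : (0 : ℝ) ≤ m := Nat.cast_nonneg m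
  have hloc : ∀ R ∈ lev E m, ∑ j, ∑ i, lv w R j i * (g (insert j R) * g (insert i R)) ≤
      ((d : ℝ) - m - 1) * (lam * ∑ i ∈ Rᶜ, w (insert i R) * g (insert i R) ^ 2 +
        (1 - lam) * ((((d : ℝ) - m) * w R) * Uw w d m g R ^ 2)) := by
    intro R hR
    have hg := h.wgraph R
    have hW := h.sum_lu_one R
    rw [mem_lev.1 hR] at hg hW
    have := LocSpec.general hg (hs R hR) (fun i => g (insert i R)) (Uw w d m g R) (by
      rw [hW, sum_lu, ← h.Uw_eq (k := m) (by omega)]; ring)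
    rw [hW, sum_lu w R (fun i => g (insert i R) ^ 2)] at this
    exact this
  have hsum := Finset.sum_le_sum hloc
  rw [← Finset.mul_sum, Finset.sum_add_distrib, ← Finset.mul_sum, ← Finset.mul_sum] at hsum
  have e1 : ∑ R ∈ lev E m, ∑ i ∈ Rᶜ, w (insert i R) * g (insert i R) ^ 2 =
      ((m : ℝ) + 1) * ∑ S ∈ lev E (m + 1), w S * g S ^ 2 := by
    rw [← sum_lev_succ m (fun S _ => w S * g S ^ 2), Finset.mul_sum]
    refine Finset.sum_congr rfl fun S hS => ?_
    rw [Finset.sum_const, mem_lev.1 hS, nsmul_eq_mul]; push_cast; ring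
  have hp' := hp g hg
  have e2 : ∑ S ∈ lev E (m + 1), (((m + 1 : ℕ) : ℝ) * w S) * g S ^ 2 =
      ((m : ℝ) + 1) * ∑ S ∈ lev E (m + 1), w S * g S ^ 2 := by
    rw [Finset.mul_sum]
    exact Finset.sum_congr rfl fun S _ => by push_cast; ring
  rw [e1] at hsum
  rw [e2] at hp'
  have e3 : ∑ S ∈ lev E (m + 1 + 1), ((m + 1 + 1 : ℕ) : ℝ) * w S * downOp (m + 1 + 1) g S ^ 2 =
      (∑ S ∈ lev E (m + 2), w S * (∑ i ∈ S, g (S.erase i)) ^ 2) / (m + 2) := by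
    rw [Finset.sum_div]
    refine Finset.sum_congr rfl fun S _ => ?_
    rw [← down_eq (m + 1)]
    have : (m : ℝ) + 2 ≠ 0 := by positivity
    push_cast
    field_simp
    ring
  have e4 : ∑ S ∈ lev E (m + 1), ((d : ℝ) - (m + 1 : ℕ)) * w S * g S ^ 2 =
      ((d : ℝ) - (m + 1 : ℕ)) * ∑ S ∈ lev E (m + 1), w S * g S ^ 2 := by
    rw [Finset.mul_sum]
    exact Finset.sum_congr rfl fun S _ => by ring
  rw [e3, e4, h.down_sq, div_le_iff₀ (by positivity)]
  set N := ∑ S ∈ lev E (m + 1), w S * g S ^ 2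
  set V := ∑ R ∈ lev E m, (((d : ℝ) - m) * w R) * Uw w d m g R ^ 2
  have h5 : ((d : ℝ) - m - 1) * (lam * (((m : ℝ) + 1) * N) + (1 - lam) * V) ≤
      ((d : ℝ) - m - 1) *
        (lam * (((m : ℝ) + 1) * N) + (1 - lam) * ((1 - c) * (((m : ℝ) + 1) * N))) := by
    apply mul_le_mul_of_nonneg_left _ (by linarith)
    have := mul_le_mul_of_nonneg_left hp' (sub_nonneg.2 hlam)
    linarith
  have h6 := hsum.trans h5
  have h7 : (1 - ((m : ℝ) + 1) / (m + 2) * (1 - lam) * c) *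
      (((d : ℝ) - ((m + 1 : ℕ) : ℝ)) * N) * (m + 2) =
      ((m + 2) - ((m : ℝ) + 1) * (1 - lam) * c) * (((d : ℝ) - m - 1) * N) := by
    have : (m : ℝ) + 2 ≠ 0 := by positivity
    push_cast
    field_simp
    ring
  rw [h7]
  push_cast
  linarith

/-- The sets of size one are reached from `∅`, where mean zero means zero: the gap is `1`. -/
theorem WSys.primal_zero (h : WSys w d) (hd : 0 < d) : PrimalGap w d 0 1 := by
  intro f hf
  have h1 := h.up_mean hd f
  rw [hf, mul_zero] at h1
  have hl : lev E 0 = {∅} := by simp [lev]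
  rw [hl, Finset.sum_singleton] at h1 ⊢
  rw [pow_two, ← mul_assoc, h1]
  simp

/-- The gap of the up-down walk on sets of size `n + 1`, with the product over the profile
telescoped. -/
theorem WSys.gap (h : WSys w d) {γ : ℝ} (hγ0 : 0 ≤ γ) (hγ1 : ((d : ℝ) - 1) * γ ≤ 1)
    (hprof : ∀ m n : ℕ, ∀ R : Finset E, R.card = m → m + 2 + n = d →
      LocSpec (lu w R) (lv w R) ((d : ℝ) - m - 1) (γ / (1 - n * γ)))
    (n : ℕ) (hn : n + 2 ≤ d) :
    DualGap w d (n + 1)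
      (1 / ((n : ℝ) + 2) * ((1 - ((d : ℝ) - 1) * γ) / (1 - ((d : ℝ) - (n + 2)) * γ))) := by
  have hposg : ∀ n : ℕ, n + 2 ≤ d → 0 < 1 - ((d : ℝ) - (n + 2)) * γ := by
    intro n hn
    have hn0 : (0 : ℝ) ≤ n := Nat.cast_nonneg n
    rcases hγ0.eq_or_lt with h0 | h0
    · rw [← h0]; simp
    · nlinarith
  induction n with
  | zero =>
    have hd : ((d - 2 : ℕ) : ℝ) = (d : ℝ) - 2 := by
      rw [Nat.cast_sub (by omega)]; norm_num
    have hpos := hposg 0 (by omega)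
    simp only [Nat.cast_zero, zero_add] at hpos ⊢
    have := h.gap_step (m := 0) (lam := γ / (1 - ((d : ℝ) - 2) * γ)) (by omega)
      (by rw [div_le_one hpos]; linarith)
      (fun R hR => by
        rw [← hd]
        exact hprof 0 (d - 2) R (mem_lev.1 hR) (by omega)) (h.primal_zero (by omega))
    convert this using 1
    push_cast
    rw [one_sub_div hpos.ne']
    ring
  | succ n ih =>
    have ih' := h.primal_of_dual (by omega) (c := _) ?_ (ih (by omega))
    · have hpos := hposg (n + 1) (by omega)
      have hpos' := hposg n (by omega)
      push_cast at hpos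
      have hd : ((d - (n + 3) : ℕ) : ℝ) = (d : ℝ) - (n + 1 + 2) := by
        rw [Nat.cast_sub (by omega)]; push_cast; ring
      have := h.gap_step (m := n + 1) (lam := γ / (1 - ((d : ℝ) - (n + 1 + 2)) * γ)) (by omega)
        (by
          rw [div_le_one hpos]
          linarith)
        (fun R hR => by
          rw [← hd]
          exact hprof (n + 1) (d - (n + 3)) R (mem_lev.1 hR) (by omega)) ih'
      convert this using 1
      push_cast
      rw [one_sub_div hpos.ne']
      rw [show 1 - ((d : ℝ) - (n + 1 + 2)) * γ - γ = 1 - ((d : ℝ) - (n + 2)) * γ by ring]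
      have h1 : (n : ℝ) + 2 ≠ 0 := by positivity
      have h2 : (n : ℝ) + 1 + 2 ≠ 0 := by positivity
      have h3 := hpos.ne'
      have h4 := hpos'.ne'
      generalize 1 - ((d : ℝ) - (n + 1 + 2)) * γ = p at *
      generalize 1 - ((d : ℝ) - (n + 2)) * γ = q at *
      rw [show (n : ℝ) + 1 + 1 = n + 2 by ring]
      field_simp
    · have hpos' := hposg n (by omega)
      have hn0 : (0 : ℝ) ≤ n := Nat.cast_nonneg n
      have h1 : (1 - ((d : ℝ) - 1) * γ) / (1 - ((d : ℝ) - (n + 2)) * γ) ≤ 1 := by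
        rw [div_le_one hpos']
        nlinarith
      have h0 : 0 ≤ (1 - ((d : ℝ) - 1) * γ) / (1 - ((d : ℝ) - (n + 2)) * γ) :=
        div_nonneg (by linarith) hpos'.le
      have h2 : 1 / ((n : ℝ) + 2) ≤ 1 := by
        rw [div_le_one (by positivity)]; linarith
      exact mul_le_one₀ h2 h0 h1

/-! ### The variational second eigenvalue -/

theorem lamTwo_nonneg {μ : Finset E → ℝ} {A : Finset (Finset E)}
    {P : (Finset E → ℝ) → Finset E → ℝ} (hμ : ∀ x ∈ A, 0 ≤ μ x)
    (hP : ∀ f, 0 ≤ ∑ x ∈ A, μ x * f x * P f x) : 0 ≤ lamTwo μ A P := by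
  refine Real.sSup_nonneg ?_
  rintro r ⟨f, _, _, rfl⟩
  exact div_nonneg (hP f) (Finset.sum_nonneg fun x hx => mul_nonneg (hμ x hx) (sq_nonneg _))

theorem lamTwo_le {μ : Finset E → ℝ} {A : Finset (Finset E)}
    {P : (Finset E → ℝ) → Finset E → ℝ} (hμ : ∀ x ∈ A, 0 ≤ μ x) {a : ℝ} (ha : 0 ≤ a)
    (hP : ∀ f, ∑ x ∈ A, μ x * f x = 0 →
      ∑ x ∈ A, μ x * f x * P f x ≤ a * ∑ x ∈ A, μ x * f x ^ 2) : lamTwo μ A P ≤ a := by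
  refine Real.sSup_le ?_ ha
  rintro r ⟨f, h1, h2, rfl⟩
  have h0 : 0 ≤ ∑ x ∈ A, μ x * f x ^ 2 :=
    Finset.sum_nonneg fun x hx => mul_nonneg (hμ x hx) (sq_nonneg _)
  rw [div_le_iff₀ (lt_of_le_of_ne h0 (Ne.symm h2))]
  exact hP f h1

/-- A contraction bound makes the set of Rayleigh quotients bounded, so that `lamTwo` really
dominates them. -/
theorem le_lamTwo {μ : Finset E → ℝ} {A : Finset (Finset E)}
    {P : (Finset E → ℝ) → Finset E → ℝ} (hμ : ∀ x ∈ A, 0 ≤ μ x)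
    (hP : ∀ f, ∑ x ∈ A, μ x * f x = 0 →
      ∑ x ∈ A, μ x * f x * P f x ≤ ∑ x ∈ A, μ x * f x ^ 2)
    (f : Finset E → ℝ) (hf : ∑ x ∈ A, μ x * f x = 0) :
    ∑ x ∈ A, μ x * f x * P f x ≤ lamTwo μ A P * ∑ x ∈ A, μ x * f x ^ 2 := by
  have hN : ∀ f : Finset E → ℝ, 0 ≤ ∑ x ∈ A, μ x * f x ^ 2 := fun f =>
    Finset.sum_nonneg fun x hx => mul_nonneg (hμ x hx) (sq_nonneg _)
  by_cases h0 : ∑ x ∈ A, μ x * f x ^ 2 = 0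
  · have := hP f hf
    rw [h0] at this ⊢
    simpa using this
  · rw [← div_le_iff₀ (lt_of_le_of_ne (hN f) (Ne.symm h0))]
    refine le_csSup ⟨1, ?_⟩ ⟨f, hf, h0, rfl⟩
    rintro r ⟨g, h1, h2, rfl⟩
    rw [div_le_one (lt_of_le_of_ne (hN g) (Ne.symm h2))]
    exact hP g h1

/-- `λ₂(D U) = λ₂(U D)` for adjoint Markov operators; both are squared operator norms on the
functions of mean zero. -/
theorem lamTwo_comm {μ ν : Finset E → ℝ} {A B : Finset (Finset E)}
    {U D : (Finset E → ℝ) → Finset E → ℝ}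
    (hν : ∀ x ∈ B, 0 ≤ ν x) (hμ : ∀ x ∈ A, 0 ≤ μ x)
    (adj : ∀ f g, ∑ x ∈ B, ν x * (U f x * g x) = ∑ x ∈ A, μ x * (f x * D g x))
    (hU0 : ∀ f, ∑ x ∈ A, μ x * f x = 0 → ∑ x ∈ B, ν x * U f x = 0)
    (hD0 : ∀ g, ∑ x ∈ B, ν x * g x = 0 → ∑ x ∈ A, μ x * D g x = 0)
    (hD : ∀ g, ∑ x ∈ B, ν x * g x = 0 → ∑ x ∈ A, μ x * D g x ^ 2 ≤ ∑ x ∈ B, ν x * g x ^ 2) :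
    lamTwo μ A (fun f => D (U f)) = lamTwo ν B (fun g => U (D g)) := by
  have adj' : ∀ g f, ∑ x ∈ A, μ x * (D g x * f x) = ∑ x ∈ B, ν x * (g x * U f x) := by
    intro g f
    have := adj f g
    simp_rw [mul_comm (D g _), mul_comm (g _)]
    exact this.symm
  have qA : ∀ f, ∑ x ∈ A, μ x * f x * D (U f) x = ∑ x ∈ B, ν x * U f x ^ 2 := by
    intro f
    simp_rw [mul_assoc, pow_two]
    exact (adj f (U f)).symm
  have qB : ∀ g, ∑ x ∈ B, ν x * g x * U (D g) x = ∑ x ∈ A, μ x * D g x ^ 2 := by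
    intro g
    simp_rw [mul_assoc, pow_two]
    exact (adj' g (D g)).symm
  have sA : ∀ f : Finset E → ℝ, 0 ≤ ∑ x ∈ A, μ x * f x ^ 2 := fun f =>
    Finset.sum_nonneg fun x hx => mul_nonneg (hμ x hx) (sq_nonneg _)
  have sB : ∀ f : Finset E → ℝ, 0 ≤ ∑ x ∈ B, ν x * f x ^ 2 := fun f =>
    Finset.sum_nonneg fun x hx => mul_nonneg (hν x hx) (sq_nonneg _)
  have hU : ∀ f, ∑ x ∈ A, μ x * f x = 0 →
      ∑ x ∈ B, ν x * U f x ^ 2 ≤ 1 * ∑ x ∈ A, μ x * f x ^ 2 := fun f hf =>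
    dual_bound hμ hν adj' zero_le_one (fun g hg => by rw [one_mul]; exact hD g hg) f (hU0 f hf)
  have nA : 0 ≤ lamTwo μ A (fun f => D (U f)) :=
    lamTwo_nonneg hμ fun f => by rw [qA]; exact sB _
  have nB : 0 ≤ lamTwo ν B (fun g => U (D g)) :=
    lamTwo_nonneg hν fun g => by rw [qB]; exact sA _
  apply le_antisymm
  · refine lamTwo_le hμ nB fun f hf => ?_
    rw [qA]
    refine dual_bound hμ hν adj' nB (fun g hg => ?_) f (hU0 f hf)
    rw [← qB]
    exact le_lamTwo hν (fun g hg => by rw [qB]; exact hD g hg) g hg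
  · refine lamTwo_le hν nA fun g hg => ?_
    rw [qB]
    refine dual_bound hν hμ adj nA (fun f hf => ?_) g (hD0 g hg)
    rw [← qA]
    exact le_lamTwo hμ (fun f hf => by rw [qA, ← one_mul (∑ x ∈ A, _)]; exact hU f hf) f hf

/-! ### The weight system of a pure complex -/

theorem mem_faces {C : Finset (Finset E)} {k : ℕ} {S : Finset E} :
    S ∈ faces C k ↔ S ∈ C ∧ S.card = k := by simp [faces]

theorem mem_linkFaces {C : Finset (Finset E)} {T X : Finset E} {k : ℕ} :
    X ∈ linkFaces C T k ↔ T ∩ X = ∅ ∧ T ∪ X ∈ C ∧ X.card = k := by simp [linkFaces]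

variable {C : Finset (Finset E)} {pid : Finset E → ℝ}

theorem wgt_pos (hC : IsPureComplex C d) (hp : IsTopDist C d pid) {S : Finset E} (hS : S ∈ C) :
    0 < wgt C d pid S := by
  obtain ⟨T, hT, hST, hTd⟩ := hC.2.2 S hS
  refine Finset.sum_pos (fun T hT => hp.1 T (Finset.mem_filter.1 hT).1) ⟨T, ?_⟩
  simp [mem_faces, hT, hTd, hST]

theorem wgt_eq_zero (hC : IsPureComplex C d) {S : Finset E} (hS : S ∉ C) :
    wgt C d pid S = 0 := by
  refine Finset.sum_eq_zero fun T hT => ?_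
  simp only [Finset.mem_filter, mem_faces] at hT
  exact absurd (hC.2.1 T hT.1.1 S hT.2) hS

theorem wgt_wsys (hp : IsTopDist C d pid) : WSys (wgt C d pid) d where
  nn S := Finset.sum_nonneg fun T hT => (hp.1 T (Finset.mem_filter.1 hT).1).le
  cover S := by
    unfold wgt
    simp_rw [Finset.sum_filter]
    rw [Finset.sum_comm, Finset.mul_sum]
    refine Finset.sum_congr rfl fun T hT => ?_
    by_cases hST : S ⊆ T
    · have h1 : ∀ i, (insert i S ⊆ T) ↔ i ∈ T := fun i => by
        simp [Finset.insert_subset_iff, hST]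
      simp_rw [h1, if_pos hST, ← Finset.sum_filter, Finset.sum_const, nsmul_eq_mul]
      have h2 : Sᶜ.filter (· ∈ T) = T \ S := by ext; simp [and_comm]
      rw [h2, Finset.card_sdiff_of_subset hST, Nat.cast_sub (Finset.card_le_card hST),
        (mem_faces.1 hT).2]
    · rw [if_neg hST, mul_zero]
      refine Finset.sum_eq_zero fun i _ => if_neg fun h => hST ?_
      exact (Finset.subset_insert i S).trans h

theorem linkFaces_nonempty (hC : IsPureComplex C d) {T : Finset E} (hT : T ∈ C) {k : ℕ}
    (hk : T.card + k ≤ d) : (linkFaces C T k).Nonempty := by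
  obtain ⟨M, hM, hTM, hMd⟩ := hC.2.2 T hT
  have h1 : k ≤ (M \ T).card := by rw [Finset.card_sdiff_of_subset hTM]; omega
  obtain ⟨X, hX, hXk⟩ := Finset.exists_subset_card_eq h1
  refine ⟨X, mem_linkFaces.2 ⟨?_, ?_, hXk⟩⟩
  · rw [← Finset.disjoint_iff_inter_eq_empty]
    exact Finset.disjoint_of_subset_right hX Finset.disjoint_sdiff
  · exact hC.2.1 M hM _ (Finset.union_subset hTM (hX.trans Finset.sdiff_subset))

theorem levSum_pos (hC : IsPureComplex C d) (hp : IsTopDist C d pid) {k : ℕ} (hk : k ≤ d) :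
    0 < ∑ T ∈ faces C k, wgt C d pid T := by
  have h0 : ∅ ∈ C := by
    obtain ⟨S, hS⟩ := hC.1
    exact hC.2.1 S hS ∅ (Finset.empty_subset _)
  obtain ⟨X, hX⟩ := linkFaces_nonempty hC h0 (k := k) (by simpa using hk)
  rw [mem_linkFaces, Finset.empty_union] at hX
  exact Finset.sum_pos (fun S hS => wgt_pos hC hp (mem_faces.1 hS).1) ⟨X, mem_faces.2 hX.2⟩

theorem sum_piLev (hC : IsPureComplex C d) (k : ℕ) (F : Finset E → ℝ) :
    ∑ x ∈ faces C k, piLev C d pid k x * F x =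
      (∑ T ∈ faces C k, wgt C d pid T)⁻¹ * ∑ S ∈ lev E k, wgt C d pid S * F S := by
  rw [Finset.mul_sum]
  have hsub : faces C k ⊆ lev E k := fun S hS => mem_lev.2 (mem_faces.1 hS).2
  rw [← Finset.sum_subset hsub]
  · refine Finset.sum_congr rfl fun S hS => ?_
    rw [piLev, if_pos hS]; ring
  · intro S hS hS'
    rw [wgt_eq_zero hC, zero_mul, mul_zero]
    exact fun h => hS' (mem_faces.2 ⟨h, mem_lev.1 hS⟩)

theorem piLev_nonneg (hp : IsTopDist C d pid) (k : ℕ) (S : Finset E) :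
    0 ≤ piLev C d pid k S := by
  unfold piLev
  split_ifs
  · exact div_nonneg ((wgt_wsys hp).nn S) (Finset.sum_nonneg fun T _ => (wgt_wsys hp).nn T)
  · rfl

/-- Sums over the members of a family of `(k+1)`-sets above the `k`-set `R`, in terms of the
elements added to `R`; `F` is required to vanish off the family. -/
theorem sum_filter_supset {k : ℕ} {dom : Finset (Finset E)} {R : Finset E} (hR : R.card = k)
    (hdom : ∀ T ∈ dom, T.card = k + 1) (F : Finset E → ℝ)
    (hF : ∀ T, T.card = k + 1 → T ∉ dom → F T = 0) :
    ∑ T ∈ dom.filter (fun T => R ⊆ T), F T = ∑ i ∈ Rᶜ, F (insert i R) := by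
  have h1 : dom.filter (fun T => R ⊆ T) ⊆ Rᶜ.image (fun i => insert i R) := by
    intro T hT
    rw [Finset.mem_filter] at hT
    have h2 : (T \ R).card = 1 := by
      rw [Finset.card_sdiff_of_subset hT.2, hdom T hT.1, hR]; omega
    obtain ⟨i, hi⟩ := Finset.card_eq_one.1 h2
    have hiT : i ∈ T \ R := by rw [hi]; simp
    rw [Finset.mem_sdiff] at hiT
    refine Finset.mem_image.2 ⟨i, Finset.mem_compl.2 hiT.2, ?_⟩
    rw [Finset.insert_eq, ← hi, Finset.sdiff_union_of_subset hT.2]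
  rw [Finset.sum_subset h1, Finset.sum_image]
  · intro i hi j hj hij
    have hi' : i ∉ R := by simpa using hi
    have : i ∈ insert j R := by
      have := Finset.mem_insert_self i R
      simp only at hij
      rwa [hij] at this
    exact (Finset.mem_insert.1 this).resolve_right hi'
  · intro T hT hT'
    obtain ⟨i, hi, rfl⟩ := Finset.mem_image.1 hT
    have hi' : i ∉ R := by simpa using hi
    refine hF _ (by rw [Finset.card_insert_of_notMem hi', hR]) fun h => hT' ?_
    exact Finset.mem_filter.2 ⟨h, Finset.subset_insert _ _⟩

/-- The up operator does not depend on the normalisation of its measure. -/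
theorem upWith_eq {k : ℕ} {ν w' : Finset E → ℝ} {dom : Finset (Finset E)} {c : ℝ} (hc : c ≠ 0)
    {R : Finset E} (hR : R.card = k) (hdom : ∀ T ∈ dom, T.card = k + 1)
    (hν : ∀ T ∈ dom, ν T = c * w' T) (hw : ∀ T, T.card = k + 1 → T ∉ dom → w' T = 0)
    (f : Finset E → ℝ) :
    upWith ν dom f R =
      (∑ i ∈ Rᶜ, w' (insert i R) * f (insert i R)) / ∑ i ∈ Rᶜ, w' (insert i R) := by
  unfold upWith
  have h1 : ∑ T' ∈ dom.filter (fun T' => R ⊆ T'), ν T' = c * ∑ i ∈ Rᶜ, w' (insert i R) := by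
    rw [← sum_filter_supset hR hdom w' hw, Finset.mul_sum]
    exact Finset.sum_congr rfl fun T hT => hν T (Finset.mem_filter.1 hT).1
  rw [h1, ← sum_filter_supset hR hdom (fun T => w' T * f T)
    (fun T h1 h2 => by rw [hw T h1 h2, zero_mul]), Finset.sum_div]
  refine Finset.sum_congr rfl fun T hT => ?_
  rw [hν T (Finset.mem_filter.1 hT).1, mul_div_mul_left _ _ hc]
  ring

theorem upOp_eq (hC : IsPureComplex C d) (hp : IsTopDist C d pid) {k : ℕ} (hk : k < d)
    (f : Finset E → ℝ) {R : Finset E} (hR : R ∈ lev E k) :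
    upOp C d pid k f R = Uw (wgt C d pid) d k f R := by
  have hR' := mem_lev.1 hR
  have hz := levSum_pos hC hp (k := k + 1) hk
  unfold upOp
  rw [upWith_eq (w' := wgt C d pid) (inv_pos.2 hz).ne' hR' (fun T hT => (mem_faces.1 hT).2) ?_ ?_,
    (wgt_wsys hp).cover, hR', Uw]
  · intro T hT
    rw [piLev, if_pos hT]; ring
  · intro T hT hT'
    exact wgt_eq_zero hC fun h => hT' (mem_faces.2 ⟨h, hT⟩)

theorem levSum_succ (hC : IsPureComplex C d) (hp : IsTopDist C d pid) (k : ℕ) :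
    ((k + 1 : ℕ) : ℝ) * ∑ T ∈ faces C (k + 1), wgt C d pid T =
      ((d : ℝ) - k) * ∑ T ∈ faces C k, wgt C d pid T := by
  have hl : ∀ j, ∑ T ∈ faces C j, wgt C d pid T = ∑ T ∈ lev E j, wgt C d pid T := by
    intro j
    refine Finset.sum_subset (fun S hS => mem_lev.2 (mem_faces.1 hS).2) fun S hS hS' => ?_
    exact wgt_eq_zero hC fun h => hS' (mem_faces.2 ⟨h, mem_lev.1 hS⟩)
  have := (wgt_wsys hp).sum_erase k (fun _ => 1)
  simp only [mul_one] at this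
  rw [hl, hl, ← this, Finset.mul_sum]
  refine Finset.sum_congr rfl fun S hS => ?_
  rw [Finset.sum_const, mem_lev.1 hS, nsmul_eq_mul]

/-! ### The local walks -/

theorem linkPi_eq (hC : IsPureComplex C d) (hp : IsTopDist C d pid) {T : Finset E} (hT : T ∈ C)
    {k : ℕ} (hk : T.card + k ≤ d) :
    ∃ c > 0, ∀ X ∈ linkFaces C T k, linkPi C d pid T k X = c * wgt C d pid (T ∪ X) := by
  have hz := levSum_pos hC hp hk
  have hpi : ∀ X ∈ linkFaces C T k, piLev C d pid (T.card + k) (T ∪ X) =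
      wgt C d pid (T ∪ X) / ∑ S ∈ faces C (T.card + k), wgt C d pid S := by
    intro X hX
    have h := mem_linkFaces.1 hX
    rw [piLev, if_pos (mem_faces.2 ⟨h.2.1, ?_⟩)]
    rw [Finset.card_union_of_disjoint (Finset.disjoint_iff_inter_eq_empty.2 h.1), h.2.2]
  have hs : 0 < ∑ X ∈ linkFaces C T k, piLev C d pid (T.card + k) (T ∪ X) := by
    refine Finset.sum_pos (fun X hX => ?_) (linkFaces_nonempty hC hT hk)
    rw [hpi X hX]
    exact div_pos (wgt_pos hC hp (mem_linkFaces.1 hX).2.1) hz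
  refine ⟨((∑ X ∈ linkFaces C T k, piLev C d pid (T.card + k) (T ∪ X)) *
    ∑ S ∈ faces C (T.card + k), wgt C d pid S)⁻¹, by positivity, fun X hX => ?_⟩
  rw [linkPi, if_pos hX, hpi X hX]
  have h1 := hz.ne'
  have h2 := hs.ne'
  field_simp

/-- On the faces `{i}` of size one of the link of `T`, the link distribution is proportional to
the vertex weights `lu`, which vanish at all other elements of `E`. -/
theorem sum_linkPi (hC : IsPureComplex C d) (hp : IsTopDist C d pid) {T : Finset E} (hT : T ∈ C)
    (hTd : T.card + 1 ≤ d) : ∃ c > 0, ∀ F : Finset E → ℝ,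
      ∑ X ∈ linkFaces C T 1, linkPi C d pid T 1 X * F X =
        c * ∑ i, lu (wgt C d pid) T i * F {i} := by
  obtain ⟨c, hc, hcX⟩ := linkPi_eq hC hp hT hTd
  refine ⟨c, hc, fun F => ?_⟩
  have hsub : linkFaces C T 1 ⊆ Tᶜ.image (fun i => {i}) := by
    intro X hX
    obtain ⟨h1, _, h3⟩ := mem_linkFaces.1 hX
    obtain ⟨i, rfl⟩ := Finset.card_eq_one.1 h3
    refine Finset.mem_image.2 ⟨i, Finset.mem_compl.2 fun hi => ?_, rfl⟩
    rw [Finset.inter_singleton_of_mem hi] at h1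
    simp at h1
  rw [sum_lu, Finset.mul_sum, Finset.sum_congr rfl (fun X hX => by rw [hcX X hX]),
    Finset.sum_subset hsub, Finset.sum_image]
  · refine Finset.sum_congr rfl fun i _ => ?_
    rw [Finset.union_singleton]; ring
  · intro i _ j _ hij
    exact Finset.singleton_injective hij
  · intro X hX hX'
    obtain ⟨i, hi, rfl⟩ := Finset.mem_image.1 hX
    rw [wgt_eq_zero hC, mul_zero, zero_mul]
    intro h
    refine hX' (mem_linkFaces.2 ⟨?_, h, by simp⟩)
    exact Finset.inter_singleton_of_notMem (by simpa using hi)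

/-- The local walk in terms of vertex and edge weights: the lazy part of `2 P^∧ - I` cancels. -/
theorem localWalk_eq (hC : IsPureComplex C d) (hp : IsTopDist C d pid) {T : Finset E}
    (hT : T ∈ C) (hTd : T.card + 2 ≤ d) (f : Finset E → ℝ) (i : E) :
    ((d : ℝ) - T.card - 1) * (lu (wgt C d pid) T i * localWalk C d pid T f {i}) =
      ∑ l, lv (wgt C d pid) T i l * f {l} := by
  have hW := wgt_wsys hp
  set w := wgt C d pid with hw
  have hrow := hW.row T i
  by_cases h0 : lu w T i = 0
  · rw [h0, mul_zero,
      Finset.sum_eq_zero_iff_of_nonneg (fun l _ => (hW.wgraph T).vnn i l)] at hrow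
    rw [h0, zero_mul, mul_zero, Finset.sum_eq_zero]
    intro l hl
    rw [hrow l hl, zero_mul]
  · have hiT : i ∉ T := fun h => h0 (by rw [lu, if_pos h])
    have hd : (T.card : ℝ) + 2 ≤ d := by exact_mod_cast hTd
    obtain ⟨c, hc, hcX⟩ := linkPi_eq hC hp hT hTd
    set w' : Finset E → ℝ := fun X => if T ∩ X = ∅ then w (T ∪ X) else 0 with hw'
    have hup := upWith_eq (ν := linkPi C d pid T 2) (w' := w') (dom := linkFaces C T 2)
      (R := {i}) hc.ne' (Finset.card_singleton i) (fun X hX => (mem_linkFaces.1 hX).2.2)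
      (fun X hX => by
        simp only [hw']
        rw [hcX X hX, if_pos (mem_linkFaces.1 hX).1])
      (fun X hX hX' => by
        simp only [hw']
        split_ifs with h
        · exact wgt_eq_zero hC fun h' => hX' (mem_linkFaces.2 ⟨h, h', hX⟩)
        · rfl) (downOp 2 f)
    have hw'l : ∀ l ∈ ({i} : Finset E)ᶜ, w' (insert l {i}) = lv w T i l := by
      intro l hl
      have hli : l ≠ i := by simpa using hl
      simp only [hw', lv, lu, if_neg hiT]
      by_cases hlT : l ∈ T
      · rw [if_neg, if_pos (Finset.mem_insert_of_mem hlT)]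
        intro h
        have : l ∈ T ∩ insert l {i} := by simp [hlT]
        rw [h] at this
        simp at this
      · rw [if_pos, if_neg (by simp [hli, hlT])]
        · congr 1
          ext x
          simp only [Finset.mem_union, Finset.mem_insert, Finset.mem_singleton]
          tauto
        · rw [← Finset.disjoint_iff_inter_eq_empty, Finset.disjoint_insert_right,
            Finset.disjoint_singleton_right]
          exact ⟨hlT, hiT⟩
    have hext : ∀ F : E → ℝ, ∑ l ∈ ({i} : Finset E)ᶜ, w' (insert l {i}) * F l =
        ∑ l, lv w T i l * F l := by
      intro F
      rw [← Finset.sum_subset (Finset.subset_univ ({i} : Finset E)ᶜ)]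
      · exact Finset.sum_congr rfl fun l hl => by rw [hw'l l hl]
      · intro l _ hl
        have : l = i := by simpa using hl
        rw [this, lv, if_neg hiT, lu, if_pos (Finset.mem_insert_self _ _), zero_mul]
    have hden : ∑ l ∈ ({i} : Finset E)ᶜ, w' (insert l {i}) = ((d : ℝ) - T.card - 1) * lu w T i := by
      have := hext (fun _ => 1)
      simp only [mul_one] at this
      rw [this, hrow]
    have hnum : ∑ l ∈ ({i} : Finset E)ᶜ, w' (insert l {i}) * downOp 2 f (insert l {i}) =
        (((d : ℝ) - T.card - 1) * lu w T i * f {i} + ∑ l, lv w T i l * f {l}) / 2 := by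
      rw [← hrow, Finset.sum_mul, ← Finset.sum_add_distrib, Finset.sum_div]
      have : ∀ l, (lv w T i l * f {i} + lv w T i l * f {l}) / 2 =
        lv w T i l * ((f {i} + f {l}) / 2) := fun l => by ring
      simp_rw [this]
      rw [← hext (fun l => (f {i} + f {l}) / 2)]
      refine Finset.sum_congr rfl fun l hl => ?_
      have hli : l ≠ i := by simpa using hl
      congr 1
      have he : (insert l ({i} : Finset E)).erase i = {l} := by
        ext x
        simp only [Finset.mem_erase, Finset.mem_insert, Finset.mem_singleton]
        constructor
        · rintro ⟨h, h' | h'⟩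
          · exact h'
          · exact absurd h' h
        · rintro rfl
          exact ⟨hli, Or.inl rfl⟩
      unfold downOp
      rw [Finset.sum_insert (by simpa using hli), Finset.sum_singleton,
        Finset.erase_insert (by simpa using hli), he]
      simp; ring
    rw [hden, hnum] at hup
    have hlw : localWalk C d pid T f {i} =
        2 * upWith (linkPi C d pid T 2) (linkFaces C T 2) (downOp 2 f) {i} - f {i} := rfl
    rw [hlw, hup]
    have h1 : (d : ℝ) - T.card - 1 ≠ 0 := by linarith
    field_simp
    ring

/-- The hypothesis `λ₂(G_T) ≤ a` as an inequality of quadratic forms. -/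
theorem locSpec_of_lamTwo (hC : IsPureComplex C d) (hp : IsTopDist C d pid) {T : Finset E}
    (hT : T ∈ C) (hTd : T.card + 2 ≤ d) {a : ℝ}
    (ha : lamTwo (linkPi C d pid T 1) (linkFaces C T 1) (localWalk C d pid T) ≤ a) :
    LocSpec (lu (wgt C d pid) T) (lv (wgt C d pid) T) ((d : ℝ) - T.card - 1) a := by
  have hW := wgt_wsys hp
  obtain ⟨c, hc, hcF⟩ := sum_linkPi hC hp hT (by omega)
  set w := wgt C d pid with hw
  have hd : (T.card : ℝ) + 2 ≤ d := by exact_mod_cast hTd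
  have hD : 0 < (d : ℝ) - T.card - 1 := by linarith
  have hnn : ∀ X ∈ linkFaces C T 1, 0 ≤ linkPi C d pid T 1 X := by
    obtain ⟨c', hc', h⟩ := linkPi_eq hC hp hT (k := 1) (by omega)
    intro X hX
    rw [h X hX]
    exact mul_nonneg hc'.le (hW.nn _)
  have hray : ∀ f : Finset E → ℝ,
      ∑ X ∈ linkFaces C T 1, linkPi C d pid T 1 X * f X * localWalk C d pid T f X =
        c / ((d : ℝ) - T.card - 1) * ∑ i, ∑ l, lv w T i l * (f {i} * f {l}) := by
    intro f
    simp_rw [mul_assoc]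
    rw [hcF (fun X => f X * localWalk C d pid T f X), div_mul_eq_mul_div, eq_div_iff hD.ne',
      mul_assoc]
    congr 1
    rw [Finset.sum_mul]
    refine Finset.sum_congr rfl fun i _ => ?_
    have := localWalk_eq hC hp hT hTd f i
    rw [show lu w T i * (f {i} * localWalk C d pid T f {i}) * ((d : ℝ) - T.card - 1) =
      f {i} * (((d : ℝ) - T.card - 1) * (lu w T i * localWalk C d pid T f {i})) by ring, this,
      Finset.mul_sum]
    exact Finset.sum_congr rfl fun l _ => by ring
  intro g hg
  set f : Finset E → ℝ := fun X => ∑ i ∈ X, g i with hf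
  have hfi : ∀ i, f {i} = g i := fun i => by simp [hf]
  have hN : ∑ X ∈ linkFaces C T 1, linkPi C d pid T 1 X * f X ^ 2 =
      c * ∑ i, lu w T i * g i ^ 2 := by
    rw [hcF (fun X => f X ^ 2)]
    simp_rw [hfi]
  have hmain := le_lamTwo hnn (fun f _ => by
    rw [hray, hcF (fun X => f X ^ 2), div_mul_eq_mul_div, div_le_iff₀ hD, mul_assoc]
    refine mul_le_mul_of_nonneg_left ?_ hc.le
    rw [mul_comm (∑ i, _)]
    exact (hW.wgraph T).quad_le (fun i => f {i})) f (by
      rw [hcF]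
      simp_rw [hfi]
      rw [hg, mul_zero])
  rw [hray, hN] at hmain
  simp_rw [hfi] at hmain
  have hN0 : 0 ≤ c * ∑ i, lu w T i * g i ^ 2 := mul_nonneg hc.le
    (Finset.sum_nonneg fun i _ => mul_nonneg (hW.lu_nonneg T i) (sq_nonneg _))
  have h2 := hmain.trans (mul_le_mul_of_nonneg_right ha hN0)
  rw [div_mul_eq_mul_div, div_le_iff₀ hD] at h2
  refine le_of_mul_le_mul_left (h2.trans (le_of_eq ?_)) hc
  ring

/-- Off the complex all link weights vanish, so every bound holds. -/
theorem locSpec_of_notMem (hC : IsPureComplex C d) {T : Finset E} (hT : T ∉ C) (D a : ℝ) :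
    LocSpec (lu (wgt C d pid) T) (lv (wgt C d pid) T) D a := by
  have h0 : ∀ R, T ⊆ R → ∀ i, lu (wgt C d pid) R i = 0 := by
    intro R hR i
    unfold lu
    split_ifs
    · rfl
    · exact wgt_eq_zero hC fun h => hT (hC.2.1 _ h T (hR.trans (Finset.subset_insert _ _)))
  have h1 : ∀ i l, lv (wgt C d pid) T i l = 0 := by
    intro i l
    unfold lv
    rw [h0 _ (Finset.subset_insert _ _), ite_self]
  intro g _
  simp [h0 T subset_rfl, h1]

/-- **Spectral gap under the trickling-down profile.** If `0 ≤ γ ≤ 1/(d-1)`,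
`λ₂(G_T) ≤ γ` for every `T ∈ C(d-2)`, and `λ₂(G_S) < 1` for every face `S` with
`|S| ≤ d-2`, then for `2 ≤ k ≤ d`,
`λ₂(P_k^∨) = λ₂(P_{k-1}^∧) ≤ 1 - (1/k)·(1-(d-1)γ)/(1-(d-k)γ)`. -/
theorem trickling_down_profile_gap {E : Type*} [Fintype E] [DecidableEq E]
    (C : Finset (Finset E)) (d : ℕ) (pid : Finset E → ℝ)
    (hC : IsPureComplex C d) (hpid : IsTopDist C d pid)
    (γ : ℝ) (hγ0 : 0 ≤ γ) (hγ1 : γ ≤ 1 / ((d : ℝ) - 1))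
    (htop : ∀ T ∈ faces C (d-2),
      lamTwo (linkPi C d pid T 1) (linkFaces C T 1) (localWalk C d pid T) ≤ γ)
    (hconn : ∀ S ∈ C, S.card ≤ d - 2 →
      lamTwo (linkPi C d pid S 1) (linkFaces C S 1) (localWalk C d pid S) < 1)
    (k : ℕ) (hk2 : 2 ≤ k) (hkd : k ≤ d) :
    lamTwo (piLev C d pid k) (faces C k) (downUp C d pid k) =
      lamTwo (piLev C d pid (k-1)) (faces C (k-1)) (upDown C d pid (k-1)) ∧
    lamTwo (piLev C d pid k) (faces C k) (downUp C d pid k) ≤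
      1 - (1 / (k : ℝ)) * ((1 - ((d : ℝ) - 1) * γ) / (1 - ((d : ℝ) - (k : ℝ)) * γ)) := by
  obtain ⟨n, rfl⟩ : ∃ n, k = n + 2 := ⟨k - 2, by omega⟩
  have hW := wgt_wsys hpid
  have hk1 : n + 1 < d := by omega
  have hd2 : (2 : ℝ) ≤ d := by exact_mod_cast (by omega : 2 ≤ d)
  have hnd : (n : ℝ) + 2 ≤ d := by exact_mod_cast hkd
  have hn0 : (0 : ℝ) ≤ n := Nat.cast_nonneg n
  have hγ : ((d : ℝ) - 1) * γ ≤ 1 := by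
    rw [le_div_iff₀ (by linarith)] at hγ1
    linarith
  have hloc : ∀ R : Finset E, R.card + 2 ≤ d → ∃ lam < 1,
      LocSpec (lu (wgt C d pid) R) (lv (wgt C d pid) R) ((d : ℝ) - R.card - 1) lam := by
    intro R hR
    by_cases hRC : R ∈ C
    · exact ⟨_, hconn R hRC (by omega), locSpec_of_lamTwo hC hpid hRC hR le_rfl⟩
    · exact ⟨0, one_pos, locSpec_of_notMem hC hRC _ _⟩
  have hloct : ∀ R : Finset E, R.card + 2 = d →
      LocSpec (lu (wgt C d pid) R) (lv (wgt C d pid) R) ((d : ℝ) - R.card - 1) γ := by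
    intro R hR
    by_cases hRC : R ∈ C
    · exact locSpec_of_lamTwo hC hpid hRC hR.le (htop R (mem_faces.2 ⟨hRC, by omega⟩))
    · exact locSpec_of_notMem hC hRC _ _
  have hgap := hW.gap hγ0 hγ (fun m j R hR hm => by
    have := hW.profile hγ0 hγ hloct hloc j R (by omega)
    rwa [hR] at this) n hkd
  have hZ := levSum_pos hC hpid (k := n + 1) hk1.le
  have hZ' := levSum_pos hC hpid (k := n + 2) hkd
  have hZZ := levSum_succ hC hpid (n + 1)
  have hDpos : (0 : ℝ) < (d : ℝ) - ((n + 1 : ℕ) : ℝ) := by push_cast; linarith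
  -- Both `π_{k-1}` and `π_k` are the same multiple of the weights `(d - k + 1) w` and `k w` that
  -- make the unnormalised operators adjoint.
  have hc : ∃ c > 0, (∀ F : Finset E → ℝ,
      ∑ x ∈ faces C (n + 1), piLev C d pid (n + 1) x * F x =
        c * ∑ R ∈ lev E (n + 1), (((d : ℝ) - ((n + 1 : ℕ) : ℝ)) * wgt C d pid R) * F R) ∧
      (∀ F : Finset E → ℝ,
      ∑ x ∈ faces C (n + 2), piLev C d pid (n + 2) x * F x =
        c * ∑ R ∈ lev E (n + 1 + 1), (((n + 1 + 1 : ℕ) : ℝ) * wgt C d pid R) * F R) := by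
    refine ⟨(((d : ℝ) - ((n + 1 : ℕ) : ℝ)) * ∑ T ∈ faces C (n + 1), wgt C d pid T)⁻¹,
      by positivity, fun F => ?_, fun F => ?_⟩
    · rw [sum_piLev hC]
      simp_rw [mul_assoc]
      rw [← Finset.mul_sum]
      field_simp
    · rw [sum_piLev hC, ← hZZ]
      simp_rw [mul_assoc]
      rw [← Finset.mul_sum]
      have : ((n + 1 + 1 : ℕ) : ℝ) ≠ 0 := by positivity
      field_simp
  obtain ⟨c, hc, hB, hA⟩ := hc
  have hup : ∀ (f : Finset E → ℝ) (H : ℝ → Finset E → ℝ),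
      ∑ R ∈ lev E (n + 1), (((d : ℝ) - ((n + 1 : ℕ) : ℝ)) * wgt C d pid R) *
        H (upOp C d pid (n + 1) f R) R =
      ∑ R ∈ lev E (n + 1), (((d : ℝ) - ((n + 1 : ℕ) : ℝ)) * wgt C d pid R) *
        H (Uw (wgt C d pid) d (n + 1) f R) R := fun f H =>
    Finset.sum_congr rfl fun R hR => by rw [upOp_eq hC hpid hk1 f hR]
  have adj : ∀ f g : Finset E → ℝ,
      ∑ x ∈ faces C (n + 1), piLev C d pid (n + 1) x * (upOp C d pid (n + 1) f x * g x) =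
      ∑ x ∈ faces C (n + 2), piLev C d pid (n + 2) x * (f x * downOp (n + 2) g x) := by
    intro f g
    rw [hB (fun x => upOp C d pid (n + 1) f x * g x), hA (fun x => f x * downOp (n + 2) g x),
      hup f (fun y R => y * g R), hW.adj hk1]
  have mB : ∀ g : Finset E → ℝ, ∑ x ∈ faces C (n + 1), piLev C d pid (n + 1) x * g x = 0 →
      ∑ R ∈ lev E (n + 1), wgt C d pid R * g R = 0 := by
    intro g hg
    rw [hB] at hg
    simp_rw [mul_assoc, ← Finset.mul_sum] at hg
    exact ((mul_eq_zero.1 ((mul_eq_zero.1 hg).resolve_left hc.ne')).resolve_left hDpos.ne')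
  have heq : lamTwo (piLev C d pid (n + 2)) (faces C (n + 2)) (downUp C d pid (n + 2)) =
      lamTwo (piLev C d pid (n + 1)) (faces C (n + 1)) (upDown C d pid (n + 1)) := by
    refine lamTwo_comm (U := upOp C d pid (n + 1)) (D := downOp (n + 2))
      (fun x _ => piLev_nonneg hpid _ x) (fun x _ => piLev_nonneg hpid _ x) adj ?_ ?_ ?_
    · intro f hf
      rw [hA] at hf
      simp_rw [mul_assoc, ← Finset.mul_sum] at hf
      have hf' := (mul_eq_zero.1 ((mul_eq_zero.1 hf).resolve_left hc.ne')).resolve_left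
        (by positivity)
      rw [hB, hup f (fun y _ => y), hW.up_mean hk1, hf', mul_zero, mul_zero]
    · intro g hg
      rw [hA, hW.down_mean, mB g hg, mul_zero, mul_zero]
    · intro g _
      rw [hA (fun x => downOp (n + 2) g x ^ 2), hB (fun x => g x ^ 2)]
      refine mul_le_mul_of_nonneg_left ((hW.down_contr (n + 1) g).trans (le_of_eq ?_)) hc.le
      rw [Finset.mul_sum]
      exact Finset.sum_congr rfl fun x _ => by ring
  refine ⟨heq, ?_⟩
  rw [heq]
  have hpos : 0 < 1 - ((d : ℝ) - ((n : ℝ) + 2)) * γ := by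
    rcases hγ0.eq_or_lt with h0 | h0
    · rw [← h0]; simp
    · nlinarith
  push_cast
  refine lamTwo_le (fun x _ => piLev_nonneg hpid _ x) ?_ fun g hg => ?_
  · have h1 : (1 - ((d : ℝ) - 1) * γ) / (1 - ((d : ℝ) - (n + 2)) * γ) ≤ 1 := by
      rw [div_le_one hpos]
      nlinarith
    have h0 : 0 ≤ (1 - ((d : ℝ) - 1) * γ) / (1 - ((d : ℝ) - (n + 2)) * γ) :=
      div_nonneg (by linarith) hpos.le
    have h2 : 1 / ((n : ℝ) + 2) ≤ 1 := by
      rw [div_le_one (by positivity)]; linarith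
    exact sub_nonneg.2 (mul_le_one₀ h2 h0 h1)
  · have e1 : ∑ x ∈ faces C (n + 1), piLev C d pid (n + 1) x * g x * upDown C d pid (n + 1) g x =
        ∑ x ∈ faces C (n + 2), piLev C d pid (n + 2) x * downOp (n + 2) g x ^ 2 := by
      simp_rw [pow_two]
      rw [← adj (downOp (n + 2) g) g]
      refine Finset.sum_congr rfl fun x _ => ?_
      rw [show upDown C d pid (n + 1) g x = upOp C d pid (n + 1) (downOp (n + 2) g) x from rfl]
      ring
    rw [e1, hA (fun x => downOp (n + 2) g x ^ 2), hB (fun x => g x ^ 2)]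
    have := mul_le_mul_of_nonneg_left (hgap g (mB g hg)) hc.le
    refine this.trans (le_of_eq ?_)
    ring
end
end

section
/- Explicit solution of the contraction recursion: Let m ≥ 0 and let a_0, …, a_m be real numbers with −1 < a_j < 1 for all j. Set s_j := 2/(1 + a_j), and define v_0 := s_0 and v_k := s_k − (s_k − 1)/v_{k−1} for 1 ≤ k ≤ m. Then every v_k > 1 (so the recursion is well defined), and for all 0 ≤ k ≤ m, v_k = 1 + 1/(Σ_{i=0}^{k} Π_{j=i}^{k} (1 + a_j)/(1 − a_j)). -/
/-!
Write `r_j = (1 + a_j)/(1 - a_j) > 0` and `S_k = Σ_{i ≤ k} Π_{j=i}^k r_j`. Since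
`s_k - 1 = 1/r_k`, the substitution `v_k = 1 + 1/S_k` linearises the recursion: it becomes
`S_k = r_k (1 + S_{k-1})`, which the sums satisfy by `sum_prod_Icc_succ`. Induction gives the
closed form, and positivity of `S_k` gives `v_k > 1`.
-/

/-- The sequence `v_k` of the contraction recursion: with `s_k := 2/(1 + a_k)`,
`v_0 = s_0` and `v_k = s_k - (s_k - 1)/v_{k-1}`. -/
noncomputable def vOf (a : ℕ → ℝ) : ℕ → ℝ
  | 0 => 2 / (1 + a 0)
  | k + 1 => 2 / (1 + a (k+1)) - (2 / (1 + a (k+1)) - 1) / vOf a k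

/-- The weighted sums satisfy the affine recursion `S_{k+1} = r_{k+1} (1 + S_k)`. -/
lemma sum_prod_Icc_succ (r : ℕ → ℝ) (k : ℕ) :
    ∑ i ∈ Finset.range (k + 1 + 1), ∏ j ∈ Finset.Icc i (k + 1), r j =
      r (k + 1) * (1 + ∑ i ∈ Finset.range (k + 1), ∏ j ∈ Finset.Icc i k, r j) := by
  have h : ∀ i ∈ Finset.range (k + 1), ∏ j ∈ Finset.Icc i (k + 1), r j =
      r (k + 1) * ∏ j ∈ Finset.Icc i k, r j := by
    intro i hi
    have hi' : i ≤ k + 1 := (Finset.mem_range.mp hi).le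
    rw [Finset.prod_Icc_succ_top hi', mul_comm]
  rw [Finset.sum_range_succ, Finset.sum_congr rfl h, ← Finset.mul_sum]
  simp only [Finset.Icc_self, Finset.prod_singleton]
  ring

/-- **Explicit solution of the contraction recursion.** If `-1 < a_j < 1` for all `j ≤ m`,
then all `v_k > 1` (so the recursion is well defined), and
`v_k = 1 + 1/(Σ_{i=0}^k Π_{j=i}^k (1+a_j)/(1-a_j))` for all `k ≤ m`. -/
theorem contraction_recursion_solution (m : ℕ) (a : ℕ → ℝ)
    (ha : ∀ j ≤ m, -1 < a j ∧ a j < 1) :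
    (∀ k ≤ m, 1 < vOf a k) ∧
    (∀ k ≤ m, vOf a k =
      1 + 1 / ∑ i ∈ Finset.range (k+1), ∏ j ∈ Finset.Icc i k, (1 + a j) / (1 - a j)) := by
  have hS : ∀ k ≤ m,
      0 < ∑ i ∈ Finset.range (k+1), ∏ j ∈ Finset.Icc i k, (1 + a j) / (1 - a j) := by
    intro k hk
    refine Finset.sum_pos (fun i _ => Finset.prod_pos fun j hj => ?_) (by simp)
    obtain ⟨h1, h2⟩ := ha j ((Finset.mem_Icc.mp hj).2.trans hk)
    exact div_pos (by linarith) (by linarith)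
  have hv : ∀ k ≤ m, vOf a k =
      1 + 1 / ∑ i ∈ Finset.range (k+1), ∏ j ∈ Finset.Icc i k, (1 + a j) / (1 - a j) := by
    intro k
    induction k with
    | zero =>
      intro hk
      obtain ⟨h1, h2⟩ := ha 0 hk
      have h3 : 1 + a 0 ≠ 0 := by linarith
      have h4 : 1 - a 0 ≠ 0 := by linarith
      simp only [vOf, zero_add, Finset.range_one, Finset.sum_singleton, Finset.Icc_self,
        Finset.prod_singleton]
      field_simp
      ring
    | succ k ih =>
      intro hk
      obtain ⟨h1, h2⟩ := ha (k + 1) hk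
      have hpos := hS k (by omega)
      rw [vOf, ih (by omega), sum_prod_Icc_succ (fun j => (1 + a j) / (1 - a j)) k]
      generalize ∑ i ∈ Finset.range (k+1), ∏ j ∈ Finset.Icc i k, (1 + a j) / (1 - a j) = S
        at hpos ⊢
      have h3 : 1 + a (k + 1) ≠ 0 := by linarith
      have h4 : 1 - a (k + 1) ≠ 0 := by linarith
      have h5 : 1 + S ≠ 0 := by linarith
      have h6 : S ≠ 0 := hpos.ne'
      have h7 : 1 + 1 / S = (1 + S) / S := by field_simp; ring
      rw [h7]
      field_simp
      ring
  refine ⟨fun k hk => ?_, hv⟩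
  rw [hv k hk]
  have := one_div_pos.mpr (hS k hk)
  linarith
end

section
/- Let (a_0, …, a_m) be an admissible spectral profile. Then for every 1 ≤ k ≤ m, a_k·(k+1) + Π_{i=0}^{k} (1 − a_i) ≥ 1. -/
/-- `(a_0, …, a_m)` is an admissible spectral profile: each `a_i < 1`, and
`a_{i-1} ≤ a_i / (1 - a_i)` for `1 ≤ i ≤ m`. -/
def IsAdmissible (m : ℕ) (a : ℕ → ℝ) : Prop :=
  (∀ i ≤ m, a i < 1) ∧ ∀ i, 1 ≤ i → i ≤ m → a (i-1) ≤ a i / (1 - a i)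

/-- The bound by induction on `k`, started at `k = 0`, where it is an equality. Multiplying the
bound for `k` by `1 - a (k+1) > 0` and using `a k * (1 - a (k+1)) ≤ a (k+1)`, which is the
admissibility inequality cleared of its denominator, gives
`∏ ≥ (1 - a (k+1)) - (k+1) * a (k+1) = 1 - (k+2) * a (k+1)`. -/
lemma one_le_of_isAdmissible (m : ℕ) (a : ℕ → ℝ) (h : IsAdmissible m a) :
    ∀ k ≤ m, 1 ≤ a k * ((k : ℝ) + 1) + ∏ i ∈ Finset.range (k+1), (1 - a i) := by
  intro k
  induction k with
  | zero => intro _; simp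
  | succ k ih =>
    intro hk
    have hpos : 0 < 1 - a (k+1) := sub_pos.mpr (h.1 _ hk)
    have hstep : a k * (1 - a (k+1)) ≤ a (k+1) := by
      have := h.2 (k+1) (by omega) hk
      rwa [Nat.add_sub_cancel, le_div_iff₀ hpos] at this
    have hprod := mul_le_mul_of_nonneg_right (ih (by omega)) hpos.le
    have hscaled := mul_le_mul_of_nonneg_right hstep (by positivity : (0 : ℝ) ≤ (k : ℝ) + 1)
    rw [Finset.prod_range_succ]
    push_cast
    linarith

/-- For an admissible spectral profile `(a_0, …, a_m)` and every `1 ≤ k ≤ m`,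
`a_k (k+1) + Π_{i=0}^k (1 - a_i) ≥ 1`. -/
theorem admissible_profile_property (m : ℕ) (a : ℕ → ℝ) (h : IsAdmissible m a) :
    ∀ k, 1 ≤ k → k ≤ m →
      a k * ((k : ℝ) + 1) + ∏ i ∈ Finset.range (k+1), (1 - a i) ≥ 1 := by
  exact fun k _ hk => one_le_of_isAdmissible m a h k hk
end

section
/- Comparison with the Alev–Lau bound: Let (a_0, …, a_m) be an admissible spectral profile with −1 < a_j for all j. Set s_j := 2/(1 + a_j), v_0 := s_0 and v_k := s_k − (s_k − 1)/v_{k−1} for 1 ≤ k ≤ m. Then for every 0 ≤ k ≤ m, 1/v_k ≥ 1 − (1/(k+2)) · Π_{i=0}^{k} (1 − a_i). -/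
/-- A Bernoulli-type bound: admissibility says `(1 - a_k) a_{k-1} ≤ a_k`, so multiplying
`P_{k-1} ≥ 1 - k a_{k-1}` by `1 - a_k` gives `P_k ≥ 1 - a_k - k a_k`. -/
theorem IsAdmissible.one_sub_mul_le_prod {m : ℕ} {a : ℕ → ℝ} (h : IsAdmissible m a) (k : ℕ)
    (hk : k ≤ m) :
    1 - ((k : ℝ) + 1) * a k ≤ ∏ i ∈ Finset.range (k + 1), (1 - a i) := by
  induction k with
  | zero => simp
  | succ k ih =>
    rw [Finset.prod_range_succ]
    have hlt : 0 < 1 - a (k + 1) := sub_pos.2 (h.1 _ hk)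
    have hadm : a k * (1 - a (k + 1)) ≤ a (k + 1) :=
      (le_div_iff₀ hlt).1 (h.2 (k + 1) (by omega) hk)
    have hmul := mul_le_mul_of_nonneg_right (ih (by omega)) hlt.le
    have hadm' := mul_le_mul_of_nonneg_left hadm (by positivity : (0 : ℝ) ≤ (k : ℝ) + 1)
    push_cast
    linarith

theorem vOf_succ_eq {a : ℕ → ℝ} {k : ℕ} (ha : -1 < a (k + 1)) :
    vOf a (k + 1) = 1 + (1 - a (k + 1)) / (1 + a (k + 1)) * (1 - 1 / vOf a k) := by
  have hpos : 1 + a (k + 1) ≠ 0 := by linarith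
  have hr : 2 / (1 + a (k + 1)) = 1 + (1 - a (k + 1)) / (1 + a (k + 1)) := by
    field_simp
    ring
  rw [vOf, hr]
  ring

/-- The inductive invariant, with `u_k = 1 - 1/v_k`: the bound `(k + 2) u_k ≤ P_k` is carried
along with `v_k > 1`, which keeps all denominators positive. -/
theorem IsAdmissible.one_lt_vOf_and_bound {m : ℕ} {a : ℕ → ℝ} (h : IsAdmissible m a)
    (ha : ∀ j ≤ m, -1 < a j) (k : ℕ) (hk : k ≤ m) :
    1 < vOf a k ∧
      ((k : ℝ) + 2) * (1 - 1 / vOf a k) ≤ ∏ i ∈ Finset.range (k + 1), (1 - a i) := by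
  induction k with
  | zero =>
    have hlt := h.1 0 hk
    have hgt := ha 0 hk
    refine ⟨?_, ?_⟩
    · rw [vOf, lt_div_iff₀ (by linarith)]
      linarith
    · simp only [vOf, one_div_div, zero_add, Finset.prod_range_one, Nat.cast_zero]
      linarith
  | succ k ih =>
    obtain ⟨hv, hb⟩ := ih (by omega)
    have hlt : 0 < 1 - a (k + 1) := sub_pos.2 (h.1 _ hk)
    have hgt : 0 < 1 + a (k + 1) := by linarith [ha (k + 1) hk]
    have hP := h.one_sub_mul_le_prod (k + 1) hk
    have hu : 0 < 1 - 1 / vOf a k := by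
      rw [sub_pos, div_lt_one (by linarith)]
      exact hv
    rw [vOf_succ_eq (ha _ hk)]
    rw [Finset.prod_range_succ] at hP ⊢
    push_cast at hP ⊢
    generalize 1 - 1 / vOf a k = u at *
    generalize ∏ i ∈ Finset.range (k + 1), (1 - a i) = P at *
    generalize a (k + 1) = x at *
    have hru : 0 < (1 - x) / (1 + x) * u := by positivity
    refine ⟨by linarith, ?_⟩
    have hkey : u * ((k : ℝ) + 3 - P * (1 - x)) ≤ P * (1 + x) := by
      have h1 := mul_le_mul_of_nonneg_left hP hu.le
      have h2 := mul_le_mul_of_nonneg_right hb hgt.le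
      linarith
    have hden : 0 < 1 + x + (1 - x) * u := by positivity
    have hrew : 1 - 1 / (1 + (1 - x) / (1 + x) * u) =
        (1 - x) * u / (1 + x + (1 - x) * u) := by
      have := hgt.ne'
      have := hden.ne'
      have : 1 + (1 - x) / (1 + x) * u ≠ 0 := by linarith
      field_simp
      ring
    rw [hrew, ← mul_div_assoc, div_le_iff₀ hden]
    have h3 := mul_le_mul_of_nonneg_left hkey hlt.le
    linarith

/-- **Comparison with the Alev–Lau bound.** For an admissible spectral profile with
`-1 < a_j` for all `j ≤ m`, and `v` the contraction recursion built from
`s_j = 2/(1+a_j)`, we have `1/v_k ≥ 1 - (1/(k+2)) Π_{i=0}^k (1 - a_i)` for all `k ≤ m`. -/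
theorem comparison_with_AL (m : ℕ) (a : ℕ → ℝ) (h : IsAdmissible m a)
    (ha : ∀ j ≤ m, -1 < a j) :
    ∀ k ≤ m, 1 / vOf a k ≥
      1 - (1 / ((k : ℝ) + 2)) * ∏ i ∈ Finset.range (k+1), (1 - a i) := by
  intro k hk
  have hb := (h.one_lt_vOf_and_bound ha k hk).2
  have hpos : (0 : ℝ) < (k : ℝ) + 2 := by positivity
  have hdiv : 1 - 1 / vOf a k ≤
      (1 / ((k : ℝ) + 2)) * ∏ i ∈ Finset.range (k+1), (1 - a i) := by
    rw [one_div_mul_eq_div, le_div_iff₀ hpos]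
    linarith
  linarith
end
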